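/- arXiv:math/0608375 — 11 statements merged into one kernel-verified Lean document; each statement's English description precedes it below -/
import Mathlib

section
/- For every bounded real sequence x = (x_1, x_2, …) and every k ≥ 1 one has |(H(Tx))_k − (T(Hx))_k| ≤ 2‖x‖_∞/(k+1); consequently the sequence H(Tx) − T(Hx) converges to 0, i.e. H(Tx) − T(Hx) ∈ c₀. -/
open Filter

/-- The shift operator on (1-indexed) sequences: `(T x)_k = x_{k+1}`. -/
def shiftSeq (x : ℕ → ℝ) : ℕ → ℝ := fun k => x (k + 1)

/-- The Cesàro operator on (1-indexed) sequences: `(H x)_k = (x_1 + ⋯ + x_k)/k`. -/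
noncomputable def cesaroSeq (x : ℕ → ℝ) : ℕ → ℝ :=
  fun k => (∑ i ∈ Finset.Icc 1 k, x i) / k

/-- For every bounded real sequence `x` and every `k ≥ 1`,
`|(H(Tx))_k − (T(Hx))_k| ≤ 2‖x‖_∞/(k+1)` (stated for any uniform bound `C` of `x`);
consequently `H(Tx) − T(Hx) ∈ c₀`. -/
theorem cesaro_shift_commutator_bound (x : ℕ → ℝ) (C : ℝ)
    (hx : ∀ k : ℕ, 1 ≤ k → |x k| ≤ C) :
    (∀ k : ℕ, 1 ≤ k →
      |cesaroSeq (shiftSeq x) k - shiftSeq (cesaroSeq x) k| ≤ 2 * C / ((k : ℝ) + 1)) ∧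
    Tendsto (fun k : ℕ => cesaroSeq (shiftSeq x) k - shiftSeq (cesaroSeq x) k)
      atTop (nhds 0) := by
  have key : ∀ k : ℕ, 1 ≤ k →
      |cesaroSeq (shiftSeq x) k - shiftSeq (cesaroSeq x) k| ≤ 2 * C / ((k : ℝ) + 1) := by
    intro k hk
    have hk0 : (0 : ℝ) < k := by exact_mod_cast hk
    have hsum : ∀ n : ℕ, ∑ i ∈ Finset.Icc 1 (n + 1), x i
        = x 1 + ∑ i ∈ Finset.Icc 1 n, x (i + 1) := by
      intro n
      induction n with
      | zero => simp
      | succ n ih =>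
        rw [Finset.sum_Icc_succ_top (by omega), ih,
          Finset.sum_Icc_succ_top (by omega) (fun i => x (i + 1)), add_assoc]
    have hS : |∑ i ∈ Finset.Icc 1 k, x (i + 1)| ≤ k * C := by
      refine (Finset.abs_sum_le_sum_abs _ _).trans ?_
      refine (Finset.sum_le_card_nsmul _ _ C (fun i _ => hx (i + 1) (by omega))).trans ?_
      simp
    have h1 := abs_le.mp (hx 1 le_rfl)
    simp only [cesaroSeq, shiftSeq]
    rw [hsum k]
    generalize ∑ i ∈ Finset.Icc 1 k, x (i + 1) = S at hS ⊢
    have hS' : |S / k| ≤ C := by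
      rw [abs_div, abs_of_pos hk0, div_le_iff₀ hk0]
      linarith
    have h2 := abs_le.mp hS'
    have e : S / k - (x 1 + S) / ((k + 1 : ℕ) : ℝ) = (S / k - x 1) / ((k : ℝ) + 1) := by
      push_cast
      field_simp
      ring
    rw [e, abs_div, abs_of_pos (show (0 : ℝ) < k + 1 by positivity)]
    gcongr
    rw [abs_le]
    constructor <;> linarith [h1.1, h1.2, h2.1, h2.2]
  refine ⟨key, ?_⟩
  have hlim : Tendsto (fun k : ℕ => 2 * C / ((k : ℝ) + 1)) atTop (nhds 0) :=
    tendsto_const_nhds.div_atTop (tendsto_atTop_add_const_right _ _ tendsto_natCast_atTop_atTop)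
  refine squeeze_zero_norm' ?_ hlim
  filter_upwards [eventually_ge_atTop 1] with k hk
  exact key k hk
end

section
/- For every bounded real sequence x = (x_1, x_2, …), every n ≥ 1 and every k ≥ 1 one has |(H(D_n x))_k − (D_n(Hx))_k| ≤ 2n‖x‖_∞/k; consequently H(D_n x) − D_n(Hx) ∈ c₀, i.e. (H(D_n x))_k − (D_n(Hx))_k → 0 as k → ∞. -/
open Filter

/-- The dilation operator on (1-indexed) sequences: `(D_n x)_k = x_{⌈k/n⌉}`,
i.e. each entry of `x` is repeated `n` consecutive times. -/
def dilSeq (n : ℕ) (x : ℕ → ℝ) : ℕ → ℝ := fun k => x ((k + n - 1) / n)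

theorem dilSeq_block_sum (x : ℕ → ℝ) (n : ℕ) (hn : 1 ≤ n) (q : ℕ) :
    ∀ r : ℕ, r ≤ n → ∑ i ∈ Finset.Icc 1 (n * q + r), dilSeq n x i =
      n * ∑ i ∈ Finset.Icc 1 q, x i + r * x (q + 1) := by
  induction q with
  | zero =>
    intro r
    induction r with
    | zero => simp
    | succ r ih =>
      intro hr
      rw [← add_assoc, Finset.sum_Icc_succ_top (by omega), ih (by omega)]
      have : (n * 0 + r + 1 + n - 1) / n = 0 + 1 := by
        rw [Nat.div_eq_iff (by omega)]
        constructor <;> omega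
      simp only [dilSeq, this]
      push_cast
      ring
  | succ q ihq =>
    intro r
    induction r with
    | zero =>
      intro _
      have h := ihq n le_rfl
      rw [add_zero, Nat.mul_succ, h, Finset.sum_Icc_succ_top (by omega)]
      push_cast
      ring
    | succ r ih =>
      intro hr
      rw [← add_assoc, Finset.sum_Icc_succ_top (by omega), ih (by omega)]
      have : (n * (q + 1) + r + 1 + n - 1) / n = q + 1 + 1 := by
        have e : n * (q + 1) + r + 1 + n - 1 = r + n * (q + 1 + 1) := by
          have : n * (q + 1 + 1) = n * (q + 1) + n := by ring
          omega
        rw [e, Nat.add_mul_div_left _ _ (by omega), Nat.div_eq_of_lt (by omega)]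
        omega
      simp only [dilSeq, this]
      push_cast
      ring

/-- For every bounded real sequence `x`, every `n ≥ 1` and every `k ≥ 1`,
`|(H(D_n x))_k − (D_n(Hx))_k| ≤ 2n‖x‖_∞/k` (stated for any uniform bound `C` of `x`);
consequently `H(D_n x) − D_n(Hx) ∈ c₀`. -/
theorem cesaro_dilation_commutator_bound (x : ℕ → ℝ) (C : ℝ)
    (hx : ∀ k : ℕ, 1 ≤ k → |x k| ≤ C) (n : ℕ) (hn : 1 ≤ n) :
    (∀ k : ℕ, 1 ≤ k →
      |cesaroSeq (dilSeq n x) k - dilSeq n (cesaroSeq x) k| ≤ 2 * (n : ℝ) * C / (k : ℝ)) ∧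
    Tendsto (fun k : ℕ => cesaroSeq (dilSeq n x) k - dilSeq n (cesaroSeq x) k)
      atTop (nhds 0) := by
  have hC : 0 ≤ C := (abs_nonneg _).trans (hx 1 le_rfl)
  have key : ∀ k : ℕ, 1 ≤ k →
      |cesaroSeq (dilSeq n x) k - dilSeq n (cesaroSeq x) k| ≤ 2 * (n : ℝ) * C / (k : ℝ) := by
    intro k hk
    obtain ⟨q, r, hr1, hrn, rfl⟩ : ∃ q r : ℕ, 1 ≤ r ∧ r ≤ n ∧ k = n * q + r := by
      refine ⟨(k - 1) / n, (k - 1) % n + 1, by omega, Nat.mod_lt _ (by omega), ?_⟩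
      have := Nat.div_add_mod (k - 1) n
      omega
    have hm : (n * q + r + n - 1) / n = q + 1 := by
      have e : n * q + r + n - 1 = (r - 1) + n * (q + 1) := by
        have : n * (q + 1) = n * q + n := by ring
        omega
      rw [e, Nat.add_mul_div_left _ _ (by omega), Nat.div_eq_of_lt (by omega)]
      omega
    have hd : dilSeq n (cesaroSeq x) (n * q + r) = cesaroSeq x (q + 1) := by
      simp only [dilSeq, hm]
    rw [hd]
    unfold cesaroSeq
    rw [dilSeq_block_sum x n hn q r hrn, Finset.sum_Icc_succ_top (by omega)]
    have hS : |∑ i ∈ Finset.Icc 1 q, x i| ≤ q * C := by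
      refine (Finset.abs_sum_le_sum_abs _ _).trans ?_
      refine (Finset.sum_le_card_nsmul _ _ C ?_).trans ?_
      · intro i hi
        exact hx i (Finset.mem_Icc.mp hi).1
      · simp
    have hX := hx (q + 1) (by omega)
    generalize ∑ i ∈ Finset.Icc 1 q, x i = S at hS ⊢
    generalize x (q + 1) = y at hX ⊢
    have hk' : (0 : ℝ) < ((n * q + r : ℕ) : ℝ) := by exact_mod_cast hk
    have hq' : (0 : ℝ) < ((q + 1 : ℕ) : ℝ) := by positivity
    have e : (n * S + r * y) / ((n * q + r : ℕ) : ℝ) - (S + y) / ((q + 1 : ℕ) : ℝ)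
        = (((n : ℝ) - r) * (S - q * y) / ((q + 1 : ℕ) : ℝ)) / ((n * q + r : ℕ) : ℝ) := by
      field_simp
      push_cast
      ring
    rw [e, abs_div, abs_of_pos hk']
    refine div_le_div_of_nonneg_right ?_ hk'.le
    rw [abs_div, abs_of_pos hq', div_le_iff₀ hq', abs_mul]
    have hr' : (r : ℝ) ≤ n := by exact_mod_cast hrn
    have h1 : |(n : ℝ) - r| ≤ n := by
      rw [abs_of_nonneg (by linarith)]
      have : (0 : ℝ) ≤ r := by positivity
      linarith
    have h2 : |S - q * y| ≤ 2 * C * ((q + 1 : ℕ) : ℝ) := by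
      have h3 : |(q : ℝ) * y| ≤ q * C := by
        rw [abs_mul, abs_of_nonneg (by positivity : (0 : ℝ) ≤ q)]
        gcongr
      have := abs_sub S (q * y)
      push_cast
      nlinarith
    calc _ ≤ (n : ℝ) * (2 * C * ((q + 1 : ℕ) : ℝ)) := by gcongr
      _ = _ := by ring
  refine ⟨key, ?_⟩
  refine squeeze_zero_norm' ?_ (tendsto_const_div_atTop_nhds_zero_nat (2 * (n : ℝ) * C))
  filter_upwards [eventually_ge_atTop 1] with k hk
  exact key k hk
end

section
/- There exists a state ω̃ on ℓ∞ (that is, a linear functional with ω̃(x) ≥ 0 whenever x ≥ 0 coordinatewise, and ω̃(𝟏) = 1 where 𝟏 = (1,1,1,…)) such that ω̃ ∘ T = ω̃, ω̃ ∘ H = ω̃, and ω̃ ∘ D_n = ω̃ for every n ≥ 1. -/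
open Filter

/-- A sequence is bounded (belongs to ℓ∞). -/
def BddSeq (x : ℕ → ℝ) : Prop := ∃ C : ℝ, ∀ k, |x k| ≤ C

lemma sum_Icc_eq_range (x : ℕ → ℝ) (k : ℕ) :
    ∑ i ∈ Finset.Icc 1 k, x i = ∑ i ∈ Finset.range k, x (i + 1) := by
  induction k with
  | zero => simp
  | succ k ih => rw [Finset.sum_Icc_succ_top (by omega), Finset.sum_range_succ, ih]

lemma cesaro_tendsto {x : ℕ → ℝ} {a : ℝ} (h : Tendsto x atTop (nhds a)) :
    Tendsto (cesaroSeq x) atTop (nhds a) := by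
  have h1 := ((tendsto_add_atTop_iff_nat 1).2 h).cesaro
  refine h1.congr fun k => ?_
  unfold cesaroSeq
  rw [sum_Icc_eq_range]
  ring

lemma tendsto_zero_of_le {z : ℕ → ℝ} (C : ℝ) (h : ∀ k : ℕ, 1 ≤ k → |z k| ≤ C / k) :
    Tendsto z atTop (nhds 0) := by
  refine squeeze_zero_norm' ?_ (tendsto_const_div_atTop_nhds_zero_nat C)
  filter_upwards [eventually_ge_atTop 1] with k hk
  exact h k hk

lemma cesaro_bdd {x : ℕ → ℝ} {C : ℝ} (h : ∀ k, |x k| ≤ C) (k : ℕ) : |cesaroSeq x k| ≤ C := by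
  have hC : 0 ≤ C := (abs_nonneg _).trans (h 0)
  unfold cesaroSeq
  rcases Nat.eq_zero_or_pos k with rfl | hk
  · simpa using hC
  · have hk' : (0 : ℝ) < k := by exact_mod_cast hk
    rw [abs_div, abs_of_pos hk', div_le_iff₀ hk']
    refine (Finset.abs_sum_le_sum_abs _ _).trans ?_
    refine (Finset.sum_le_sum fun i _ => h i).trans ?_
    simp [mul_comm]

lemma bdd_of_tendsto {x : ℕ → ℝ} {a : ℝ} (h : Tendsto x atTop (nhds a)) : BddSeq x := by
  have hb := Metric.isBounded_range_of_tendsto x h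
  obtain ⟨C, hC⟩ := hb.exists_norm_le
  exact ⟨C, fun k => hC _ ⟨k, rfl⟩⟩

/-- bounded sequences -/
def bddSub : Submodule ℝ (ℕ → ℝ) where
  carrier := {x | BddSeq x}
  add_mem' := by
    rintro x y ⟨C, hC⟩ ⟨D, hD⟩
    exact ⟨C + D, fun k => (abs_add_le _ _).trans (add_le_add (hC k) (hD k))⟩
  zero_mem' := ⟨0, fun k => by simp⟩
  smul_mem' := by
    rintro c x ⟨C, hC⟩
    refine ⟨|c| * C, fun k => ?_⟩
    simp only [Pi.smul_apply, smul_eq_mul, abs_mul]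
    exact mul_le_mul_of_nonneg_left (hC k) (abs_nonneg _)

lemma exists_ulim : ∃ φ : (ℕ → ℝ) →ₗ[ℝ] ℝ, ∀ x, BddSeq x →
    Tendsto x (hyperfilter ℕ : Filter ℕ) (nhds (φ x)) := by
  have key : ∀ x : bddSub, ∃ a : ℝ, Tendsto x.1 (hyperfilter ℕ : Filter ℕ) (nhds a) := by
    rintro ⟨x, C, hC⟩
    have hc : IsCompact (Set.Icc (-C) C) := isCompact_Icc
    obtain ⟨a, -, ha⟩ := hc.ultrafilter_le_nhds ((hyperfilter ℕ).map x) (by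
      rw [le_principal_iff]
      exact Filter.mem_map.2 (Filter.univ_mem' fun k => abs_le.1 (hC k)))
    exact ⟨a, ha⟩
  choose f hf using key
  let g : bddSub →ₗ[ℝ] ℝ :=
    { toFun := f
      map_add' := fun x y => tendsto_nhds_unique (hf (x + y)) ((hf x).add (hf y))
      map_smul' := fun c x => tendsto_nhds_unique (hf (c • x)) ((hf x).const_smul c) }
  obtain ⟨φ, hφ⟩ := g.exists_extend
  refine ⟨φ, fun x hx => ?_⟩
  have : φ x = f ⟨x, hx⟩ := LinearMap.congr_fun hφ ⟨x, hx⟩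
  rw [this]
  exact hf ⟨x, hx⟩

/-- Cesàro as a linear map -/
noncomputable def cesL : (ℕ → ℝ) →ₗ[ℝ] (ℕ → ℝ) where
  toFun := cesaroSeq
  map_add' x y := by
    ext k
    simp [cesaroSeq, Finset.sum_add_distrib, add_div]
  map_smul' c x := by
    ext k
    simp [cesaroSeq, ← Finset.mul_sum, mul_div_assoc]

lemma cesL_pow_bdd {x : ℕ → ℝ} {C : ℝ} (h : ∀ k, |x k| ≤ C) (j k : ℕ) :
    |(cesL ^ j) x k| ≤ C := by
  induction j generalizing k with
  | zero => simpa using h k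
  | succ j ih =>
    rw [pow_succ', Module.End.mul_apply]
    exact cesaro_bdd ih k

lemma cesL_pow_tendsto {x : ℕ → ℝ} {a : ℝ} (h : Tendsto x atTop (nhds a)) (j : ℕ) :
    Tendsto ((cesL ^ j) x) atTop (nhds a) := by
  induction j with
  | zero => simpa using h
  | succ j ih =>
    rw [pow_succ', Module.End.mul_apply]
    exact cesaro_tendsto ih

lemma cesL_pow_nonneg {x : ℕ → ℝ} (h : ∀ k, 0 ≤ x k) (j k : ℕ) :
    0 ≤ (cesL ^ j) x k := by
  induction j generalizing k with
  | zero => simpa using h k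
  | succ j ih =>
    rw [pow_succ', Module.End.mul_apply]
    exact div_nonneg (Finset.sum_nonneg fun i _ => ih i) (Nat.cast_nonneg _)

lemma exists_cesaro_inv : ∃ ω : (ℕ → ℝ) →ₗ[ℝ] ℝ,
    (∀ x : ℕ → ℝ, BddSeq x → (∀ k, 0 ≤ x k) → 0 ≤ ω x) ∧
    (∀ x a, Tendsto x atTop (nhds a) → ω x = a) ∧
    (∀ x : ℕ → ℝ, BddSeq x → ω (cesaroSeq x) = ω x) := by
  obtain ⟨φ, hφ⟩ := exists_ulim
  have hlim : ∀ x a, Tendsto x atTop (nhds a) → φ x = a := fun x a h =>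
    tendsto_nhds_unique (hφ x (bdd_of_tendsto h))
      (h.mono_left (by rw [← Nat.cofinite_eq_atTop]; exact hyperfilter_le_cofinite))
  have hpos : ∀ x, BddSeq x → (∀ k, 0 ≤ x k) → 0 ≤ φ x := fun x hx h =>
    ge_of_tendsto' (hφ x hx) h
  have hbd : ∀ x C, (∀ k, |x k| ≤ C) → |φ x| ≤ C := fun x C h =>
    le_of_tendsto' (hφ x ⟨C, h⟩).abs h
  let A : (ℕ → ℝ) →ₗ[ℝ] (ℕ → ℝ) := LinearMap.pi fun N : ℕ =>
    (N : ℝ)⁻¹ • ∑ j ∈ Finset.range N, φ ∘ₗ (cesL ^ j)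
  have hA : ∀ x N, A x N = (N : ℝ)⁻¹ * ∑ j ∈ Finset.range N, φ ((cesL ^ j) x) := by
    intro x N
    simp [A]
  have hAb : ∀ x, BddSeq x → BddSeq (A x) := by
    rintro x ⟨C, hC⟩
    have hC0 : 0 ≤ C := (abs_nonneg _).trans (hC 0)
    refine ⟨C, fun N => ?_⟩
    rw [hA]
    rcases Nat.eq_zero_or_pos N with rfl | hk
    · simpa using hC0
    · have hk' : (0 : ℝ) < N := by exact_mod_cast hk
      rw [abs_mul, abs_inv, abs_of_pos hk', inv_mul_le_iff₀ hk']
      refine (Finset.abs_sum_le_sum_abs _ _).trans ?_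
      refine (Finset.sum_le_sum fun j _ => hbd _ C (cesL_pow_bdd hC j)).trans ?_
      simp
  refine ⟨φ ∘ₗ A, ?_, ?_, ?_⟩
  · intro x hx h0
    refine hpos _ (hAb x hx) fun N => ?_
    rw [hA]
    obtain ⟨C, hC⟩ := hx
    exact mul_nonneg (by positivity) (Finset.sum_nonneg fun j _ =>
      hpos _ ⟨C, cesL_pow_bdd hC j⟩ (cesL_pow_nonneg h0 j))
  · intro x a h
    refine hlim _ _ ?_
    have : Tendsto (fun _ : ℕ => a) atTop (nhds a) := tendsto_const_nhds
    refine this.congr' ?_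
    filter_upwards [eventually_ge_atTop 1] with N hN
    rw [hA, Finset.sum_congr rfl fun j _ => hlim _ _ (cesL_pow_tendsto h j)]
    have : (N : ℝ) ≠ 0 := by positivity
    simp [this]
  · rintro x ⟨C, hC⟩
    rw [← sub_eq_zero, ← map_sub]
    change φ (A (cesL x - x)) = 0
    refine hlim _ _ (tendsto_zero_of_le (C + C) fun N hN => ?_)
    have hk' : (0 : ℝ) < N := by exact_mod_cast hN
    have e : ∑ j ∈ Finset.range N, φ ((cesL ^ j) (cesL x - x)) = φ ((cesL ^ N) x) - φ x := by
      have := Finset.sum_range_sub (fun j => φ ((cesL ^ j) x)) N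
      simp only [pow_zero, Module.End.one_apply] at this
      rw [← this]
      refine Finset.sum_congr rfl fun j _ => ?_
      rw [map_sub, map_sub, pow_succ, Module.End.mul_apply]
    rw [hA, e, abs_mul, abs_inv, abs_of_pos hk', inv_mul_eq_div]
    gcongr
    exact (abs_sub _ _).trans (add_le_add (hbd _ C (cesL_pow_bdd hC N)) (hbd _ C hC))

lemma ceil_props {n : ℕ} (hn : 1 ≤ n) (k : ℕ) :
    k ≤ n * ((k + n - 1) / n) ∧ n * ((k + n - 1) / n) < k + n := by
  have h1 := Nat.div_add_mod (k + n - 1) n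
  have h2 := Nat.mod_lt (k + n - 1) (show 0 < n by omega)
  constructor <;> omega

lemma ceil_tendsto {n : ℕ} (hn : 1 ≤ n) :
    Tendsto (fun k : ℕ => (k + n - 1) / n) atTop atTop := by
  rw [tendsto_atTop_atTop]
  intro b
  refine ⟨n * b, fun a ha => ?_⟩
  have := (ceil_props hn a).1
  exact Nat.le_of_mul_le_mul_left (ha.trans this) (by omega)

lemma sum_dil {n : ℕ} (hn : 1 ≤ n) (z : ℕ → ℝ) (k : ℕ) :
    ∑ i ∈ Finset.Icc 1 k, dilSeq n z i =
      n * ∑ i ∈ Finset.Icc 1 ((k + n - 1) / n), z i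
        - ((n : ℝ) * ((k + n - 1) / n : ℕ) - k) * z ((k + n - 1) / n) := by
  induction k with
  | zero =>
    have : (0 + n - 1) / n = 0 := Nat.div_eq_of_lt (by omega)
    rw [this]
    simp
  | succ k ih =>
    rw [Finset.sum_Icc_succ_top (by omega), ih]
    unfold dilSeq
    have h1 := ceil_props hn k
    have h2 := ceil_props hn (k + 1)
    set q := (k + n - 1) / n with hq
    set q' := (k + 1 + n - 1) / n with hq'
    have hle : q ≤ q' := Nat.div_le_div_right (by omega)
    have hle2 : q' ≤ q + 1 := by
      by_contra hc
      have : n * (q + 2) ≤ n * q' := Nat.mul_le_mul_left _ (by omega)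
      rw [mul_add] at this
      omega
    rcases (show q' = q ∨ q' = q + 1 by omega) with h | h
    · rw [h]; push_cast; ring
    · have hk : n * q = k := by
        rw [h, mul_add] at h2
        omega
      have hk' : (n : ℝ) * q = k := by exact_mod_cast hk
      rw [h, Finset.sum_Icc_succ_top (Nat.le_add_left 1 q)]
      push_cast
      rw [← hk']
      ring

lemma ces_dil_comm {n : ℕ} (hn : 1 ≤ n) (z : ℕ → ℝ) {C : ℝ}
    (hz : ∀ k, |cesaroSeq z k - z k| ≤ C) :
    Tendsto (cesaroSeq (dilSeq n z) - dilSeq n (cesaroSeq z)) atTop (nhds 0) := by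
  refine tendsto_zero_of_le (n * C) fun k hk => ?_
  have h1 := ceil_props hn k
  have hk' : (0 : ℝ) < k := by exact_mod_cast hk
  have e : (cesaroSeq (dilSeq n z) - dilSeq n (cesaroSeq z)) k =
      ((n : ℝ) * ((k + n - 1) / n : ℕ) - k) *
        (cesaroSeq z ((k + n - 1) / n) - z ((k + n - 1) / n)) / k := by
    rw [Pi.sub_apply, cesaroSeq, sum_dil hn, dilSeq, cesaroSeq]
    set q := (k + n - 1) / n
    have hq : (q : ℝ) ≠ 0 := by
      rintro h
      have : q = 0 := by exact_mod_cast h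
      rw [this] at h1
      omega
    field_simp
    ring
  rw [e, abs_div, abs_of_pos hk', abs_mul]
  have hz' := hz ((k + n - 1) / n)
  have a1 : (k : ℝ) ≤ n * ((k + n - 1) / n : ℕ) := by exact_mod_cast h1.1
  have a2 : (n : ℝ) * ((k + n - 1) / n : ℕ) ≤ k + n := by exact_mod_cast h1.2.le
  gcongr
  rw [abs_of_nonneg (by linarith)]
  linarith

/-- Logarithmic partial sums. -/
noncomputable def logSum (x : ℕ → ℝ) : ℕ → ℝ := fun k => ∑ i ∈ Finset.Icc 1 k, x i / i

lemma logSum_sub (x : ℕ → ℝ) :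
    logSum x - cesaroSeq (logSum x) = cesaroSeq x - cesaroSeq (fun i => x i / i) := by
  have key : ∀ k : ℕ, k * logSum x k - ∑ j ∈ Finset.Icc 1 k, logSum x j
      = ∑ i ∈ Finset.Icc 1 k, x i - logSum x k := by
    intro k
    induction k with
    | zero => simp [logSum]
    | succ k ih =>
      have e : logSum x (k + 1) = logSum x k + x (k + 1) / ((k + 1 : ℕ) : ℝ) := by
        simp only [logSum]
        rw [Finset.sum_Icc_succ_top (by omega)]
      rw [Finset.sum_Icc_succ_top (by omega), Finset.sum_Icc_succ_top (by omega), e]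
      have : ((k : ℝ) + 1) ≠ 0 := by positivity
      have e2 : x (k + 1) = (k + 1) * (x (k + 1) / ((k + 1 : ℕ) : ℝ)) := by
        push_cast; field_simp
      push_cast at e2 ⊢
      linear_combination ih - e2
  ext k
  have hk := key k
  simp only [Pi.sub_apply, cesaroSeq]
  rcases Nat.eq_zero_or_pos k with rfl | hk0
  · simp [logSum]
  · have hk' : (k : ℝ) ≠ 0 := by positivity
    change _ = _ - logSum x k / k
    field_simp
    linear_combination hk

lemma logSum_diff {x : ℕ → ℝ} {C : ℝ} (h : ∀ k, |x k| ≤ C) {q m : ℕ} (hq : 1 ≤ q) (hm : q ≤ m) :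
    |logSum x m - logSum x q| ≤ (m - q) * (C / q) := by
  have hC : 0 ≤ C := (abs_nonneg _).trans (h 0)
  induction m, hm using Nat.le_induction with
  | base => simp
  | succ m hm ih =>
    have e : logSum x (m + 1) = logSum x m + x (m + 1) / ((m + 1 : ℕ) : ℝ) := by
      simp only [logSum]
      rw [Finset.sum_Icc_succ_top (by omega)]
    have hq' : (0 : ℝ) < q := by exact_mod_cast hq
    have hb : |x (m + 1) / ((m + 1 : ℕ) : ℝ)| ≤ C / q := by
      rw [abs_div, Nat.abs_cast]
      exact div_le_div₀ hC (h _) hq' (by exact_mod_cast (by omega : q ≤ m + 1))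
    rw [e, show logSum x m + x (m + 1) / ((m + 1 : ℕ) : ℝ) - logSum x q
      = (logSum x m - logSum x q) + x (m + 1) / ((m + 1 : ℕ) : ℝ) by ring]
    refine (abs_add_le _ _).trans ((add_le_add ih hb).trans (le_of_eq ?_))
    push_cast
    ring

lemma dil_logSum_bdd {n : ℕ} (hn : 1 ≤ n) {x : ℕ → ℝ} (h : BddSeq x) :
    BddSeq (dilSeq n (logSum x) - logSum x) := by
  obtain ⟨C, h⟩ := h
  have hC : 0 ≤ C := (abs_nonneg _).trans (h 0)
  refine ⟨n * C, fun k => ?_⟩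
  rw [Pi.sub_apply, dilSeq, abs_sub_comm]
  have h1 := ceil_props hn k
  have a1 : (k : ℝ) ≤ n * ((k + n - 1) / n : ℕ) := by exact_mod_cast h1.1
  rcases Nat.eq_zero_or_pos k with rfl | hk
  · have : (0 + n - 1) / n = 0 := Nat.div_eq_of_lt (by omega)
    rw [this]
    simp
    positivity
  · have hqk : (k + n - 1) / n ≤ k := by
      have : k + n ≤ n * k + 1 := by nlinarith
      exact Nat.div_le_of_le_mul (by omega)
    set q := (k + n - 1) / n
    have hq : 1 ≤ q := by
      rw [Nat.one_le_iff_ne_zero]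
      intro h0
      rw [h0] at h1
      omega
    have hq' : (0 : ℝ) < q := by exact_mod_cast hq
    refine (logSum_diff h hq hqk).trans ?_
    rw [← mul_div_assoc, div_le_iff₀ hq']
    nlinarith

/-- There exists a state `ω̃` on `ℓ∞` (a positive linear functional with `ω̃(𝟏) = 1`)
which is invariant under the shift operator `T`, the Cesàro operator `H`,
and all the dilation operators `D_n`, `n ≥ 1`. -/
theorem exists_shift_cesaro_dilation_invariant_state :
    ∃ ω : (ℕ → ℝ) →ₗ[ℝ] ℝ,
      (∀ x : ℕ → ℝ, BddSeq x → (∀ k, 0 ≤ x k) → 0 ≤ ω x) ∧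
      ω (fun _ => 1) = 1 ∧
      (∀ x : ℕ → ℝ, BddSeq x → ω (shiftSeq x) = ω x) ∧
      (∀ x : ℕ → ℝ, BddSeq x → ω (cesaroSeq x) = ω x) ∧
      (∀ n : ℕ, 1 ≤ n → ∀ x : ℕ → ℝ, BddSeq x → ω (dilSeq n x) = ω x) := by
  obtain ⟨ω, hpos, hlim, hces⟩ := exists_cesaro_inv
  refine ⟨ω, hpos, hlim _ _ tendsto_const_nhds, ?_, hces, ?_⟩
  · rintro x ⟨C, hC⟩
    have hb : BddSeq (shiftSeq x - x) :=
      bddSub.sub_mem (x := shiftSeq x) (y := x) ⟨C, fun k => hC (k + 1)⟩ ⟨C, hC⟩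
    rw [← sub_eq_zero, ← map_sub, ← hces _ hb]
    refine hlim _ _ (tendsto_zero_of_le (C + C) fun k hk => ?_)
    have hk' : (0 : ℝ) < k := by exact_mod_cast hk
    rw [cesaroSeq, sum_Icc_eq_range, abs_div, abs_of_pos hk']
    have := Finset.sum_range_sub (fun j => x (j + 1)) k
    simp only [Pi.sub_apply, shiftSeq]
    rw [this]
    gcongr
    exact (abs_sub _ _).trans (add_le_add (hC _) (hC _))
  · intro n hn x hx
    have hx' := hx
    obtain ⟨C, hC⟩ := hx'
    have hC0 : 0 ≤ C := (abs_nonneg _).trans (hC 0)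
    have hDb : BddSeq (dilSeq n x) := ⟨C, fun k => hC _⟩
    -- the Cesàro operator and the dilation commute modulo null sequences
    have h1 : ω (cesaroSeq (dilSeq n x)) = ω (dilSeq n (cesaroSeq x)) := by
      rw [← sub_eq_zero, ← map_sub]
      exact hlim _ _ (ces_dil_comm hn x (C := C + C) fun k =>
        (abs_sub _ _).trans (add_le_add (cesaro_bdd hC k) (hC k)))
    have hF0 : Tendsto (fun i : ℕ => x i / i) atTop (nhds 0) :=
      tendsto_zero_of_le C fun k hk => by
        rw [abs_div, Nat.abs_cast]
        gcongr
        exact hC k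
    have hF := cesaro_tendsto hF0
    obtain ⟨E, hE⟩ := bdd_of_tendsto hF
    have hsub := logSum_sub x
    have hL : ∀ k, |cesaroSeq (logSum x) k - logSum x k| ≤ C + E := by
      intro k
      have := congrFun hsub k
      simp only [Pi.sub_apply] at this
      rw [abs_sub_comm, this]
      exact (abs_sub _ _).trans (add_le_add (cesaro_bdd hC k) (hE k))
    have hcomm := ces_dil_comm hn (logSum x) hL
    have hFd : Tendsto (dilSeq n (cesaroSeq fun i => x i / i)) atTop (nhds 0) :=
      hF.comp (ceil_tendsto hn)
    set L := logSum x
    set F : ℕ → ℝ := cesaroSeq fun i => x i / i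
    have hy : ω (cesaroSeq (dilSeq n L - L)) = ω (dilSeq n L - L) :=
      hces _ (dil_logSum_bdd hn hx)
    have hce : cesaroSeq (dilSeq n L - L) = cesaroSeq (dilSeq n L) - cesaroSeq L :=
      map_sub cesL _ _
    have e : dilSeq n (cesaroSeq x) - cesaroSeq x
        = ((dilSeq n L - L) - cesaroSeq (dilSeq n L - L))
          + (cesaroSeq (dilSeq n L) - dilSeq n (cesaroSeq L)) + dilSeq n F - F := by
      rw [hce]
      ext k
      have a := congrFun hsub k
      have b := congrFun hsub ((k + n - 1) / n)
      simp only [Pi.sub_apply, Pi.add_apply, dilSeq] at a b ⊢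
      linear_combination a - b
    have h2 : ω (dilSeq n (cesaroSeq x)) - ω (cesaroSeq x) = 0 := by
      rw [← map_sub, e, map_sub, map_add, map_add, map_sub ω (dilSeq n L - L), hy,
        hlim _ _ hcomm, hlim _ _ hFd, hlim _ _ hF]
      ring
    rw [← hces _ hDb, h1, ← hces x hx]
    linarith
end

section
/- Let φ be a state on ℓ∞ (a linear functional with φ(x) ≥ 0 whenever x ≥ 0 coordinatewise and φ(𝟏) = 1) such that φ(z) = 0 for every z ∈ c₀ and φ(Hx) = φ(x) for every x ∈ ℓ∞. Then φ(Tx) = φ(x) for every x ∈ ℓ∞, i.e. every Cesàro-invariant state on ℓ∞ vanishing on c₀ is a Banach limit (translation invariant). -/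
open Filter

/-- Every Cesàro-invariant state on `ℓ∞` vanishing on `c₀` is a Banach limit:
if `φ` is a positive linear functional with `φ(𝟏) = 1`, `φ(z) = 0` for every sequence
`z` converging to `0`, and `φ(Hx) = φ(x)` for all bounded `x`, then `φ(Tx) = φ(x)`
for all bounded `x`. -/
theorem cesaro_invariant_state_is_banach_limit (φ : (ℕ → ℝ) →ₗ[ℝ] ℝ)
    (hpos : ∀ x : ℕ → ℝ, BddSeq x → (∀ k, 0 ≤ x k) → 0 ≤ φ x)
    (hone : φ (fun _ => 1) = 1)
    (hc0 : ∀ z : ℕ → ℝ, Tendsto z atTop (nhds 0) → φ z = 0)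
    (hH : ∀ x : ℕ → ℝ, BddSeq x → φ (cesaroSeq x) = φ x) :
    ∀ x : ℕ → ℝ, BddSeq x → φ (shiftSeq x) = φ x := by
  intro x hx
  obtain ⟨C, hC⟩ := hx
  have hsum : ∀ k : ℕ, ∑ i ∈ Finset.Icc 1 k, x (i + 1)
      = ∑ i ∈ Finset.Icc 1 k, x i + (x (k + 1) - x 1) := by
    intro k
    induction k with
    | zero => simp
    | succ n ih =>
      rw [Finset.sum_Icc_succ_top (by omega), Finset.sum_Icc_succ_top (by omega), ih]
      ring
  have hz : φ (cesaroSeq (shiftSeq x) - cesaroSeq x) = 0 := by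
    apply hc0
    refine squeeze_zero_norm (a := fun k : ℕ => (2 * C) / (k : ℝ)) ?_
      (tendsto_const_div_atTop_nhds_zero_nat (2 * C))
    intro k
    have e : (cesaroSeq (shiftSeq x) - cesaroSeq x) k = (x (k + 1) - x 1) / k := by
      simp only [Pi.sub_apply, cesaroSeq, shiftSeq]
      rw [hsum k]
      ring
    rw [e, Real.norm_eq_abs, abs_div, Nat.abs_cast]
    have h1 := abs_sub (x (k + 1)) (x 1)
    have h2 := hC (k + 1)
    have h3 := hC 1
    gcongr
    linarith
  rw [map_sub, hH x ⟨C, hC⟩, hH (shiftSeq x) ⟨C, fun k => hC (k + 1)⟩] at hz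
  linarith
end

section
/- There exists a state ω̃ on L∞(ℝ) (a linear functional with ω̃(f) ≥ 0 whenever f ≥ 0 a.e. and ω̃(1) = 1) satisfying: (1) ω̃(f) = 0 for every continuous f : ℝ → ℝ vanishing at infinity; (2) ess liminf_{t → +∞} f(t) ≤ ω̃(f) ≤ ess limsup_{t → +∞} f(t) for every real-valued f ∈ L∞(ℝ); (3) ω̃(f) = 0 whenever the essential support of f is compact; (4) ω̃ ∘ T_c = ω̃, ω̃ ∘ D_a = ω̃ and ω̃ ∘ H = ω̃ for all c ∈ ℝ and a > 0. -/
open Filter MeasureTheory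

/-- A function is (everywhere) bounded. -/
def BddFun (f : ℝ → ℝ) : Prop := ∃ C : ℝ, ∀ x, |f x| ≤ C

namespace CesaroState

/-- integral against `dx/x` from 1 to `X` -/
noncomputable def A (f : ℝ → ℝ) (X : ℝ) : ℝ := ∫ x in (1:ℝ)..X, f x * x⁻¹

/-- the bounded measurable functions -/
def V : Submodule ℝ (ℝ → ℝ) where
  carrier := {f | Measurable f ∧ BddFun f}
  add_mem' := by
    rintro f g ⟨hf, C, hC⟩ ⟨hg, D, hD⟩
    refine ⟨hf.add hg, C + D, fun x => ?_⟩
    exact (abs_add_le _ _).trans (add_le_add (hC x) (hD x))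
  zero_mem' := ⟨measurable_const, 0, fun x => by simp⟩
  smul_mem' := by
    rintro c f ⟨hf, C, hC⟩
    refine ⟨hf.const_smul c, |c| * C, fun x => ?_⟩
    simp only [Pi.smul_apply, smul_eq_mul, abs_mul]
    exact mul_le_mul_of_nonneg_left (hC x) (abs_nonneg c)

lemma locInt {f : ℝ → ℝ} (hf : Measurable f) (hb : BddFun f) : LocallyIntegrable f volume := by
  obtain ⟨C, hC⟩ := hb
  intro x
  refine ⟨Metric.ball x 1, Metric.ball_mem_nhds x one_pos, ?_⟩
  exact Measure.integrableOn_of_bounded (M := C) (by simp) hf.aestronglyMeasurable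
    (Eventually.of_forall fun y => hC y)

lemma ii {f : ℝ → ℝ} (hf : Measurable f) (hb : BddFun f) (a b : ℝ) :
    IntervalIntegrable f volume a b :=
  intervalIntegrable_iff.mpr <|
    ((locInt hf hb).integrableOn_isCompact isCompact_uIcc).mono_set Set.uIoc_subset_uIcc

lemma ii' {f : ℝ → ℝ} (hf : Measurable f) (hb : BddFun f) {a b : ℝ} (ha : 0 < a) (hb' : 0 < b) :
    IntervalIntegrable (fun x => f x * x⁻¹) volume a b := by
  refine (ii hf hb a b).mul_continuousOn ?_
  refine continuousOn_inv₀.mono fun x hx => ?_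
  exact (lt_of_lt_of_le (lt_min ha hb') hx.1).ne'

lemma inv_int {a b : ℝ} (ha : 0 < a) (hb' : 0 < b) :
    IntervalIntegrable (fun x : ℝ => x⁻¹) volume a b := by
  have := ii' (f := fun _ => 1) measurable_const ⟨1, fun _ => by simp⟩ ha hb'
  simpa using this

lemma A_bound {f : ℝ → ℝ} {C : ℝ} (hC : ∀ x, |f x| ≤ C) {a b : ℝ} (ha : 0 < a) (hb : 0 < b) :
    |∫ x in a..b, f x * x⁻¹| ≤ C * |Real.log (b / a)| := by
  have hC0 : 0 ≤ C := (abs_nonneg _).trans (hC 0)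
  have h := intervalIntegral.norm_integral_le_abs_of_norm_le (μ := volume)
    (f := fun x => f x * x⁻¹) (g := fun x : ℝ => C * x⁻¹) (a := a) (b := b) ?_
    ((inv_int ha hb).const_mul C)
  · rw [intervalIntegral.integral_const_mul, integral_inv_of_pos ha hb, abs_mul,
      abs_of_nonneg hC0] at h
    exact h
  · refine (ae_restrict_iff' measurableSet_uIoc).2 (Eventually.of_forall fun x hx => ?_)
    have hx0 : 0 < x := lt_trans (lt_min ha hb) hx.1
    rw [norm_mul, Real.norm_eq_abs, Real.norm_eq_abs, abs_of_pos (inv_pos.2 hx0)]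
    exact mul_le_mul_of_nonneg_right (hC x) (inv_pos.2 hx0).le

lemma A_upper {f : ℝ → ℝ} (hf : Measurable f) (hb : BddFun f) {b : ℝ}
    (h : ∀ᶠ x in atTop ⊓ ae (volume : Measure ℝ), f x ≤ b) :
    ∃ K : ℝ, ∀ᶠ X in atTop, A f X ≤ K + b * Real.log X := by
  rw [Filter.eventually_inf] at h
  obtain ⟨s, hs, t, ht, hst⟩ := h
  obtain ⟨N, hN⟩ := mem_atTop_sets.1 hs
  set M := max N 1 with hM
  have hM1 : 1 ≤ M := le_max_right _ _
  have hM0 : 0 < M := by linarith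
  refine ⟨A f M - b * Real.log M, ?_⟩
  filter_upwards [eventually_ge_atTop M] with X hX
  have hX0 : 0 < X := by linarith
  have e : A f X = A f M + ∫ x in M..X, f x * x⁻¹ :=
    (intervalIntegral.integral_add_adjacent_intervals (ii' hf hb one_pos hM0)
      (ii' hf hb hM0 hX0)).symm
  have h2 : ∫ x in M..X, f x * x⁻¹ ≤ ∫ x in M..X, b * x⁻¹ := by
    refine intervalIntegral.integral_mono_ae_restrict hX (ii' hf hb hM0 hX0)
      ((inv_int hM0 hX0).const_mul b) ?_
    refine (ae_restrict_iff' measurableSet_Icc).2 ?_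
    filter_upwards [ht] with x hx hx'
    have hx0 : 0 < x := lt_of_lt_of_le hM0 hx'.1
    have : f x ≤ b := hst x ⟨hN x ((le_max_left _ _).trans hx'.1), hx⟩
    exact mul_le_mul_of_nonneg_right this (inv_pos.2 hx0).le
  rw [intervalIntegral.integral_const_mul, integral_inv_of_pos hM0 hX0,
    Real.log_div hX0.ne' hM0.ne'] at h2
  rw [e]; linarith

lemma prim_bound {f : ℝ → ℝ} {C : ℝ} (hC : ∀ x, |f x| ≤ C) (a b : ℝ) :
    |∫ v in a..b, f v| ≤ C * |b - a| := by
  rw [← Real.norm_eq_abs]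
  exact intervalIntegral.norm_integral_le_of_norm_le_const fun x _ => hC x

lemma ces_mem {f : ℝ → ℝ} (hf : Measurable f) (hb : BddFun f) :
    Measurable (fun u => (∫ v in (0:ℝ)..u, f v) / u) ∧
      BddFun (fun u => (∫ v in (0:ℝ)..u, f v) / u) := by
  constructor
  · exact (intervalIntegral.continuous_primitive (ii hf hb) 0).measurable.div measurable_id
  · obtain ⟨C, hC⟩ := hb
    refine ⟨C, fun u => ?_⟩
    have hC0 : 0 ≤ C := (abs_nonneg _).trans (hC 0)
    rw [abs_div]
    refine div_le_of_le_mul₀ (abs_nonneg _) hC0 ?_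
    simpa using prim_bound hC 0 u

lemma A_ces {f : ℝ → ℝ} (hf : Measurable f) (hb : BddFun f) {X : ℝ} (hX : 1 ≤ X) :
    A (fun u => (∫ v in (0:ℝ)..u, f v) / u) X =
      A f X - (∫ v in (0:ℝ)..X, f v) / X + ∫ v in (0:ℝ)..1, f v := by
  obtain ⟨C, hC⟩ := id hb
  set F : ℝ → ℝ := fun u => ∫ v in (0:ℝ)..u, f v with hF
  have hFl : LipschitzWith (Real.toNNReal C) F := by
    refine LipschitzWith.of_dist_le_mul fun x y => ?_
    have hC0 : 0 ≤ C := (abs_nonneg _).trans (hC 0)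
    rw [Real.coe_toNNReal _ hC0, Real.dist_eq, Real.dist_eq, hF]
    simp only
    rw [intervalIntegral.integral_interval_sub_left (ii hf hb _ _) (ii hf hb _ _)]
    exact prim_bound hC y x
  have hFa : AbsolutelyContinuousOnInterval F 1 X :=
    (hFl.lipschitzOnWith).absolutelyContinuousOnInterval
  have hpos : ∀ x ∈ Set.uIcc 1 X, 0 < x := fun x hx => by
    rw [Set.uIcc_of_le hX] at hx; linarith [hx.1]
  have hGa : AbsolutelyContinuousOnInterval (fun x : ℝ => - x⁻¹) 1 X := by
    refine ContDiffOn.absolutelyContinuousOnInterval ?_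
    exact (contDiffOn_id.inv fun x hx => (hpos x hx).ne').neg
  have key := hFa.integral_mul_deriv_eq_deriv_mul hGa
  have e1 : ∫ x in (1:ℝ)..X, F x * deriv (fun x : ℝ => - x⁻¹) x = A (fun u => F u / u) X := by
    refine intervalIntegral.integral_congr fun x hx => ?_
    have := (hpos x hx).ne'
    simp only [deriv.fun_neg, deriv_inv]
    field_simp
  have e2 : ∫ x in (1:ℝ)..X, deriv F x * (fun x : ℝ => - x⁻¹) x = - A f X := by
    rw [A, ← intervalIntegral.integral_neg]
    refine intervalIntegral.integral_congr_ae ?_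
    filter_upwards [LocallyIntegrable.ae_hasDerivAt_integral (locInt hf hb)] with x hx _
    rw [(hx 0).deriv]; ring
  rw [e1, e2] at key
  rw [key]
  simp only [inv_one]
  ring

lemma A_dil {f : ℝ → ℝ} (hf : Measurable f) (hb : BddFun f) {a : ℝ} (ha : 0 < a) :
    ∃ K : ℝ, ∀ X, 1 ≤ X → |A (fun x => f (x / a)) X - A f X| ≤ K := by
  obtain ⟨C, hC⟩ := id hb
  refine ⟨C * |Real.log a| + C * |Real.log a|, fun X hX => ?_⟩
  have hX0 : 0 < X := by linarith
  have hXa : 0 < X / a := div_pos hX0 ha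
  have h1a : 0 < 1 / a := div_pos one_pos ha
  have e : A (fun x => f (x / a)) X = ∫ x in (1/a)..(X/a), f x * x⁻¹ := by
    have := intervalIntegral.inv_mul_integral_comp_div (f := fun x => f x * x⁻¹)
      (a := 1) (b := X) a
    rw [← this, ← intervalIntegral.integral_const_mul]
    refine intervalIntegral.integral_congr fun x hx => ?_
    have := ha.ne'
    simp only [inv_div]
    field_simp
  have e2 := intervalIntegral.integral_interval_sub_interval_comm
    (ii' hf hb h1a hXa) (ii' hf hb one_pos hX0) (ii' hf hb h1a one_pos)
  rw [e, A, e2]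
  have b1 := A_bound hC h1a one_pos
  have b2 := A_bound hC hXa hX0
  rw [show 1 / (1 / a) = a by field_simp] at b1
  rw [show X / (X / a) = a by field_simp] at b2
  exact (abs_sub _ _).trans (add_le_add b1 b2)

/-- the ultrafilter -/
noncomputable def U : Ultrafilter ℝ := Ultrafilter.of atTop

lemma U_le : (U : Filter ℝ) ≤ atTop := Ultrafilter.of_le _

lemma exists_lim {f : ℝ → ℝ} (hb : BddFun f) :
    ∃ l, Tendsto (fun X => A f X / Real.log X) U (nhds l) := by
  obtain ⟨C, hC⟩ := hb
  have hmem : ∀ᶠ X in (U : Filter ℝ), A f X / Real.log X ∈ Set.Icc (-C) C := by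
    refine U_le ?_
    filter_upwards [eventually_gt_atTop 1] with X hX
    have hl : 0 < Real.log X := Real.log_pos hX
    have h := A_bound hC one_pos (by linarith : 0 < X)
    rw [div_one, abs_of_pos hl] at h
    rw [Set.mem_Icc, ← abs_le, abs_div, abs_of_pos hl, div_le_iff₀ hl]
    exact h
  obtain ⟨l, -, hl⟩ := (isCompact_Icc (a := -C) (b := C)).ultrafilter_le_nhds
    (U.map fun X => A f X / Real.log X) (le_principal_iff.2 hmem)
  exact ⟨l, hl⟩

lemma exists_functional : ∃ ω : (ℝ → ℝ) →ₗ[ℝ] ℝ, ∀ f, Measurable f → BddFun f →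
    Tendsto (fun X => A f X / Real.log X) U (nhds (ω f)) := by
  choose L hL using fun f : V => exists_lim f.2.2
  have hpos : ∀ᶠ X in (U : Filter ℝ), 0 < X := U_le (eventually_gt_atTop 0)
  let L' : V →ₗ[ℝ] ℝ :=
    { toFun := L
      map_add' := fun f g => by
        refine tendsto_nhds_unique (hL (f + g)) (((hL f).add (hL g)).congr' ?_)
        filter_upwards [hpos] with X hX
        rw [← add_div]
        congr 1
        unfold A
        rw [← intervalIntegral.integral_add (ii' f.2.1 f.2.2 one_pos hX)
          (ii' g.2.1 g.2.2 one_pos hX)]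
        refine intervalIntegral.integral_congr fun x hx => ?_
        simp [add_mul]
      map_smul' := fun c f => by
        refine tendsto_nhds_unique (hL (c • f)) (((hL f).const_mul c).congr' ?_)
        filter_upwards [hpos] with X hX
        rw [← mul_div_assoc]
        congr 1
        unfold A
        rw [← intervalIntegral.integral_const_mul]
        refine intervalIntegral.integral_congr fun x hx => ?_
        simp [mul_assoc] }
  obtain ⟨ω, hω⟩ := L'.exists_extend
  refine ⟨ω, fun f hf hb => ?_⟩
  have := LinearMap.congr_fun hω ⟨f, hf, hb⟩
  have h2 : ω f = L ⟨f, hf, hb⟩ := this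
  rw [h2]
  exact hL ⟨f, hf, hb⟩

lemma tendsto_inv_log (K : ℝ) : Tendsto (fun X => K / Real.log X) U (nhds 0) :=
  (Real.tendsto_log_atTop.const_div_atTop K).mono_left U_le

lemma eq_of_bdd {ω : (ℝ → ℝ) →ₗ[ℝ] ℝ} (hω : ∀ f, Measurable f → BddFun f →
    Tendsto (fun X => A f X / Real.log X) U (nhds (ω f))) {f g : ℝ → ℝ}
    (hf : Measurable f) (hb : BddFun f) (hg : Measurable g) (hgb : BddFun g) {K : ℝ}
    (h : ∀ X, 1 ≤ X → |A g X - A f X| ≤ K) : ω g = ω f := by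
  have h1 : Tendsto (fun X => A g X / Real.log X - A f X / Real.log X) U (nhds 0) := by
    refine squeeze_zero_norm' (U_le ?_) (tendsto_inv_log K)
    filter_upwards [eventually_gt_atTop 1] with X hX
    have hl : 0 < Real.log X := Real.log_pos hX
    rw [← sub_div, norm_div, Real.norm_eq_abs, Real.norm_eq_abs, abs_of_pos hl]
    exact div_le_div_of_nonneg_right (h X hX.le) hl.le
  exact sub_eq_zero.1 (tendsto_nhds_unique ((hω g hg hgb).sub (hω f hf hb)) h1)

lemma upper {ω : (ℝ → ℝ) →ₗ[ℝ] ℝ} (hω : ∀ f, Measurable f → BddFun f →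
    Tendsto (fun X => A f X / Real.log X) U (nhds (ω f))) {f : ℝ → ℝ}
    (hf : Measurable f) (hb : BddFun f) {b : ℝ}
    (h : ∀ᶠ x in atTop ⊓ ae (volume : Measure ℝ), f x ≤ b) : ω f ≤ b := by
  obtain ⟨K, hK⟩ := A_upper hf hb h
  have h1 : Tendsto (fun X => K / Real.log X + b) U (nhds (0 + b)) :=
    (tendsto_inv_log K).add_const b
  rw [zero_add] at h1
  refine le_of_tendsto_of_tendsto (hω f hf hb) h1 (U_le ?_)
  filter_upwards [eventually_gt_atTop 1, hK] with X hX hX'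
  have hl : 0 < Real.log X := Real.log_pos hX
  rw [div_le_iff₀ hl, add_mul, div_mul_cancel₀ _ hl.ne']
  exact hX'

lemma bdd_neg {f : ℝ → ℝ} (hb : BddFun f) : BddFun (-f) := by
  obtain ⟨C, hC⟩ := hb
  exact ⟨C, fun x => by simpa using hC x⟩

lemma lower {ω : (ℝ → ℝ) →ₗ[ℝ] ℝ} (hω : ∀ f, Measurable f → BddFun f →
    Tendsto (fun X => A f X / Real.log X) U (nhds (ω f))) {f : ℝ → ℝ}
    (hf : Measurable f) (hb : BddFun f) {b : ℝ}
    (h : ∀ᶠ x in atTop ⊓ ae (volume : Measure ℝ), b ≤ f x) : b ≤ ω f := by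
  have := upper hω hf.neg (bdd_neg hb) (b := -b) (h.mono fun x hx => by simpa using hx)
  rw [map_neg] at this
  linarith

lemma zero_of_tendsto {ω : (ℝ → ℝ) →ₗ[ℝ] ℝ} (hω : ∀ f, Measurable f → BddFun f →
    Tendsto (fun X => A f X / Real.log X) U (nhds (ω f))) {f : ℝ → ℝ}
    (hf : Measurable f) (hb : BddFun f) (h : Tendsto f atTop (nhds 0)) : ω f = 0 := by
  apply le_antisymm
  · refine le_of_forall_gt_imp_ge_of_dense fun b hb' => upper hω hf hb ?_
    exact ((h.eventually_lt_const hb').mono fun x => le_of_lt).filter_mono inf_le_left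
  · refine le_of_forall_lt_imp_le_of_dense fun b hb' => lower hω hf hb ?_
    exact ((h.eventually_const_lt hb').mono fun x => le_of_lt).filter_mono inf_le_left

lemma bdd_c0 {f : ℝ → ℝ} (hf : Continuous f) (h : Tendsto f (cocompact ℝ) (nhds 0)) :
    BddFun f := by
  have h1 : ∀ᶠ x in cocompact ℝ, f x ∈ Metric.ball 0 1 := h (Metric.ball_mem_nhds 0 one_pos)
  obtain ⟨K, hK, hKs⟩ := mem_cocompact.1 h1
  obtain ⟨C, hC⟩ := hK.exists_bound_of_continuousOn hf.continuousOn
  refine ⟨max C 1, fun x => ?_⟩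
  by_cases hx : x ∈ K
  · exact (hC x hx).trans (le_max_left _ _)
  · have : f x ∈ Metric.ball 0 1 := hKs hx
    rw [mem_ball_zero_iff] at this
    exact this.le.trans (le_max_right _ _)

lemma ces_trans {f : ℝ → ℝ} (hf : Measurable f) (hb : BddFun f) (c : ℝ) :
    Tendsto ((fun u => (∫ v in (0:ℝ)..u, f (v + c)) / u) - fun u => (∫ v in (0:ℝ)..u, f v) / u)
      atTop (nhds 0) := by
  obtain ⟨C, hC⟩ := id hb
  refine squeeze_zero_norm' (a := fun u => (2 * C * |c|) / u) ?_
    (tendsto_id.const_div_atTop _)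
  filter_upwards [eventually_gt_atTop 0] with u hu
  simp only [Pi.sub_apply]
  rw [intervalIntegral.integral_comp_add_right, ← sub_div, norm_div, Real.norm_eq_abs,
    Real.norm_eq_abs, abs_of_pos hu]
  refine div_le_div_of_nonneg_right ?_ hu.le
  rw [intervalIntegral.integral_interval_sub_interval_comm (ii hf hb _ _) (ii hf hb _ _)
    (ii hf hb _ _)]
  have h1 := prim_bound hC (0 + c) 0
  have h2 := prim_bound hC (u + c) u
  have e1 : |0 - (0 + c)| = |c| := by rw [← abs_neg]; congr 1; ring
  have e2 : |u - (u + c)| = |c| := by rw [← abs_neg]; congr 1; ring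
  rw [e1] at h1
  rw [e2] at h2
  refine (abs_sub _ _).trans ?_
  linarith

end CesaroState

/-- There exists a state `ω̃` on `L∞(ℝ)` (a positive linear functional with `ω̃(1) = 1`)
satisfying: (1) `ω̃` vanishes on continuous functions vanishing at infinity;
(2) `ess liminf_{t→∞} f ≤ ω̃(f) ≤ ess limsup_{t→∞} f` for every bounded measurable `f`;
(3) `ω̃(f) = 0` whenever `f` has compact essential support;
(4) `ω̃` is invariant under all translations `T_c`, all dilations `D_a` (`a > 0`)
and the Cesàro operator `H`. -/
theorem exists_translation_dilation_cesaro_invariant_state_Linfty :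
    ∃ ω : (ℝ → ℝ) →ₗ[ℝ] ℝ,
      -- ω is a state: positive and normalised
      (∀ f : ℝ → ℝ, Measurable f → BddFun f →
        (∀ᵐ x ∂(volume : Measure ℝ), 0 ≤ f x) → 0 ≤ ω f) ∧
      ω (fun _ => 1) = 1 ∧
      -- (1) ω vanishes on continuous functions vanishing at infinity
      (∀ f : ℝ → ℝ, Continuous f → Tendsto f (cocompact ℝ) (nhds 0) → ω f = 0) ∧
      -- (2) ess liminf at +∞ ≤ ω f ≤ ess limsup at +∞
      (∀ f : ℝ → ℝ, Measurable f → BddFun f →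
        liminf f (atTop ⊓ ae (volume : Measure ℝ)) ≤ ω f ∧
          ω f ≤ limsup f (atTop ⊓ ae (volume : Measure ℝ))) ∧
      -- (3) ω vanishes on functions with compact essential support
      (∀ f : ℝ → ℝ, Measurable f → BddFun f →
        (∃ K : Set ℝ, IsCompact K ∧ ∀ᵐ x ∂(volume : Measure ℝ), x ∉ K → f x = 0) →
        ω f = 0) ∧
      -- (4) invariance under translations, dilations and the Cesàro operator
      (∀ f : ℝ → ℝ, Measurable f → BddFun f →
        (∀ c : ℝ, ω (fun x => f (x + c)) = ω f) ∧
        (∀ a : ℝ, 0 < a → ω (fun x => f (x / a)) = ω f) ∧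
        ω (fun u => (∫ v in (0:ℝ)..u, f v) / u) = ω f) := by
  obtain ⟨ω, hω⟩ := CesaroState.exists_functional
  have hH : ∀ f : ℝ → ℝ, Measurable f → BddFun f →
      ω (fun u => (∫ v in (0:ℝ)..u, f v) / u) = ω f := by
    intro f hf hb
    obtain ⟨hm, D, hD⟩ := CesaroState.ces_mem hf hb
    refine CesaroState.eq_of_bdd hω hf hb hm ⟨D, hD⟩
      (K := D + |∫ v in (0:ℝ)..1, f v|) fun X hX => ?_
    rw [CesaroState.A_ces hf hb hX]
    have h1 := hD X
    have e : CesaroState.A f X - (∫ v in (0:ℝ)..X, f v) / X + (∫ v in (0:ℝ)..1, f v)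
        - CesaroState.A f X = (∫ v in (0:ℝ)..1, f v) - (∫ v in (0:ℝ)..X, f v) / X := by ring
    rw [e]
    refine (abs_sub _ _).trans ?_
    linarith
  refine ⟨ω, ?_, ?_, ?_, ?_, ?_, ?_⟩
  · intro f hf hb h
    exact CesaroState.lower hω hf hb (Eventually.filter_mono inf_le_right h)
  · have hb : BddFun (fun _ => 1) := ⟨1, fun _ => by simp⟩
    exact le_antisymm
      (CesaroState.upper hω measurable_const hb (Eventually.of_forall fun _ => le_rfl))
      (CesaroState.lower hω measurable_const hb (Eventually.of_forall fun _ => le_rfl))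
  · intro f hf h
    exact CesaroState.zero_of_tendsto hω hf.measurable (CesaroState.bdd_c0 hf h)
      (h.mono_left atTop_le_cocompact)
  · intro f hf hb
    obtain ⟨C, hC⟩ := id hb
    constructor
    · refine le_of_forall_lt_imp_le_of_dense fun b hb' => CesaroState.lower hω hf hb ?_
      refine (eventually_lt_of_lt_liminf hb' ?_).mono fun x => le_of_lt
      exact isBoundedUnder_of ⟨-C, fun x => (abs_le.1 (hC x)).1⟩
    · refine le_of_forall_gt_imp_ge_of_dense fun b hb' => CesaroState.upper hω hf hb ?_
      refine (eventually_lt_of_limsup_lt hb' ?_).mono fun x => le_of_lt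
      exact isBoundedUnder_of ⟨C, fun x => (abs_le.1 (hC x)).2⟩
  · rintro f hf hb ⟨K, hK, h⟩
    have hz : ∀ᶠ x in atTop ⊓ ae (volume : Measure ℝ), f x = 0 := by
      have h1 : ∀ᶠ x in atTop ⊓ ae (volume : Measure ℝ), x ∉ K :=
        Eventually.filter_mono inf_le_left
          (atTop_le_cocompact hK.compl_mem_cocompact : Kᶜ ∈ atTop)
      have h2 : ∀ᶠ x in atTop ⊓ ae (volume : Measure ℝ), x ∉ K → f x = 0 :=
        Eventually.filter_mono inf_le_right h
      filter_upwards [h1, h2] with x a b using b a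
    exact le_antisymm (CesaroState.upper hω hf hb (hz.mono fun x hx => hx.le))
      (CesaroState.lower hω hf hb (hz.mono fun x hx => hx.ge))
  · intro f hf hb
    refine ⟨fun c => ?_, fun a ha => ?_, hH f hf hb⟩
    · have hmc : Measurable fun x => f (x + c) := hf.comp (measurable_id.add_const c)
      have hbc : BddFun fun x => f (x + c) := by
        obtain ⟨C, hC⟩ := hb
        exact ⟨C, fun x => hC _⟩
      rw [← hH f hf hb, ← hH _ hmc hbc, ← sub_eq_zero, ← map_sub]
      have h1 := CesaroState.ces_mem hf hb
      have h2 := CesaroState.ces_mem hmc hbc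
      have h3 := CesaroState.V.sub_mem (x := _) (y := _) h2 h1
      exact CesaroState.zero_of_tendsto hω h3.1 h3.2 (CesaroState.ces_trans hf hb c)
    · obtain ⟨K, hK⟩ := CesaroState.A_dil hf hb ha
      have hmc : Measurable fun x => f (x / a) := hf.comp (measurable_id.div_const a)
      have hbc : BddFun fun x => f (x / a) := by
        obtain ⟨C, hC⟩ := hb
        exact ⟨C, fun x => hC _⟩
      exact CesaroState.eq_of_bdd hω hf hb hmc hbc hK
end

section
/- Let f : [0,∞) → ℝ be bounded and continuous and let A ∈ ℝ. Suppose that 𝕃(f) = A for every linear functional 𝕃 on L∞((0,∞)) which is positive (𝕃(g) ≥ 0 whenever g ≥ 0 a.e.), satisfies ess liminf_{t → +∞} g(t) ≤ 𝕃(g) ≤ ess limsup_{t → +∞} g(t) for every real-valued g ∈ L∞((0,∞)), and is translation invariant: 𝕃(g(· + c)) = 𝕃(g) for every c > 0. Then lim_{t → ∞} (1/t)∫₀^t f(s) ds = A. -/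
open Filter MeasureTheory

/-- The Cesàro mean of `g` on `[0,t]`. -/
noncomputable def cesMean (g : ℝ → ℝ) (t : ℝ) : ℝ := (∫ s in (0:ℝ)..t, g s) / t

/-- Functions that are bounded and a.e. measurable on the half line. -/
def goodSub : Submodule ℝ (ℝ → ℝ) where
  carrier := {g | AEStronglyMeasurable g ((volume : Measure ℝ).restrict (Set.Ioi 0)) ∧
    ∃ C : ℝ, ∀ t : ℝ, 0 ≤ t → |g t| ≤ C}
  zero_mem' := ⟨aestronglyMeasurable_zero, 0, fun t _ => by simp⟩
  add_mem' := by
    rintro a b ⟨ha, C, hC⟩ ⟨hb, D, hD⟩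
    exact ⟨ha.add hb, C + D, fun t ht => (abs_add_le _ _).trans (add_le_add (hC t ht) (hD t ht))⟩
  smul_mem' := by
    rintro c a ⟨ha, C, hC⟩
    refine ⟨ha.const_smul c, |c| * C, fun t ht => ?_⟩
    simp only [Pi.smul_apply, smul_eq_mul, abs_mul]
    exact mul_le_mul_of_nonneg_left (hC t ht) (abs_nonneg c)

lemma good_intble {g : ℝ → ℝ} (hg : g ∈ goodSub) {a b : ℝ} (ha : 0 ≤ a) (hb : 0 ≤ b) :
    IntervalIntegrable g volume a b := by
  obtain ⟨hm, C, hC⟩ := hg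
  have hsub : Set.uIoc a b ⊆ Set.Ioi 0 := fun x hx => by
    rw [Set.mem_uIoc] at hx
    rcases hx with hx | hx
    · exact lt_of_le_of_lt ha hx.1
    · exact lt_of_le_of_lt hb hx.1
  rw [intervalIntegrable_iff]
  refine IntegrableOn.of_bound ?_ (hm.mono_set hsub) C ?_
  · simp [Set.uIoc]
  · refine (ae_restrict_iff' measurableSet_uIoc).2 (Eventually.of_forall fun x hx => ?_)
    exact hC x (le_of_lt (hsub hx))

lemma good_int_bound {g : ℝ → ℝ} {C : ℝ} (hC : ∀ t : ℝ, 0 ≤ t → |g t| ≤ C) {a b : ℝ}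
    (ha : 0 ≤ a) (hb : 0 ≤ b) : |∫ s in a..b, g s| ≤ C * |b - a| := by
  refine intervalIntegral.norm_integral_le_of_norm_le_const (f := g) fun x hx => hC x ?_
  rw [Set.mem_uIoc] at hx
  rcases hx with hx | hx
  · exact ha.trans hx.1.le
  · exact hb.trans hx.1.le

lemma good_lim {g : ℝ → ℝ} (hg : g ∈ goodSub) (U : Ultrafilter ℝ) (hU : (U : Filter ℝ) ≤ atTop) :
    ∃ l, Tendsto (cesMean g) U (nhds l) := by
  obtain ⟨hm, C, hC⟩ := hg
  have h : ∀ᶠ t in (U : Filter ℝ), cesMean g t ∈ Set.Icc (-C) C := by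
    filter_upwards [hU (eventually_gt_atTop (0:ℝ))] with t ht
    have h1 := good_int_bound hC le_rfl (le_of_lt ht)
    rw [sub_zero, abs_of_pos ht] at h1
    rw [Set.mem_Icc, ← abs_le, cesMean, abs_div, abs_of_pos ht]
    exact (div_le_iff₀ ht).2 h1
  obtain ⟨l, _, hl⟩ := isCompact_Icc.ultrafilter_le_nhds' (U.map (cesMean g)) h
  exact ⟨l, hl⟩

lemma ces_add {g h : ℝ → ℝ} (hg : g ∈ goodSub) (hh : h ∈ goodSub) {t : ℝ} (ht : 0 ≤ t) :
    cesMean (g + h) t = cesMean g t + cesMean h t := by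
  have := intervalIntegral.integral_add (good_intble hg le_rfl ht) (good_intble hh le_rfl ht)
  simp only [cesMean, Pi.add_apply, this, add_div]

lemma ces_smul (g : ℝ → ℝ) (c t : ℝ) : cesMean (c • g) t = c * cesMean g t := by
  simp [cesMean, mul_div_assoc]

lemma exists_mean (U : Ultrafilter ℝ) (hU : (U : Filter ℝ) ≤ atTop) :
    ∃ L : (ℝ → ℝ) →ₗ[ℝ] ℝ, ∀ g ∈ goodSub, Tendsto (cesMean g) U (nhds (L g)) := by
  choose l hl using fun g : goodSub => good_lim g.2 U hU
  let L0 : goodSub →ₗ[ℝ] ℝ :=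
    { toFun := l
      map_add' := fun g h => by
        refine tendsto_nhds_unique (hl (g + h)) (((hl g).add (hl h)).congr' ?_)
        filter_upwards [hU (eventually_ge_atTop (0:ℝ))] with t ht
        exact (ces_add g.2 h.2 ht).symm
      map_smul' := fun c g => by
        refine tendsto_nhds_unique (hl (c • g)) (((hl g).const_mul c).congr ?_)
        intro t
        exact (ces_smul g c t).symm }
  obtain ⟨L, hL⟩ := L0.exists_extend
  refine ⟨L, fun g hg => ?_⟩
  have h := LinearMap.congr_fun hL ⟨g, hg⟩
  have h' : L g = l ⟨g, hg⟩ := h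
  rw [h']
  exact hl ⟨g, hg⟩

lemma good_lower {g : ℝ → ℝ} (hg : g ∈ goodSub) {U : Ultrafilter ℝ} (hU : (U : Filter ℝ) ≤ atTop)
    {l a : ℝ} (hl : Tendsto (cesMean g) U (nhds l))
    (ha : ∀ᶠ x in atTop ⊓ ae ((volume : Measure ℝ).restrict (Set.Ioi 0)), a ≤ g x) : a ≤ l := by
  rw [eventually_inf] at ha
  obtain ⟨s, hs, s', hs', h⟩ := ha
  obtain ⟨T0, hT0⟩ := mem_atTop_sets.1 hs
  set T := max T0 0 with hT
  have hTn : 0 ≤ T := le_max_right _ _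
  have hae : ∀ᵐ x ∂(volume : Measure ℝ), 0 < x → x ∈ s' :=
    (ae_restrict_iff' measurableSet_Ioi).1 hs'
  have hlow : ∀ t, T < t → ((∫ s in (0:ℝ)..T, g s) + a * (t - T)) / t ≤ cesMean g t := by
    intro t ht
    have ht0 : 0 ≤ t := hTn.trans ht.le
    rw [cesMean, ← intervalIntegral.integral_add_adjacent_intervals (good_intble hg le_rfl hTn)
      (good_intble hg hTn ht0)]
    refine div_le_div_of_nonneg_right (add_le_add le_rfl ?_) ht0
    have hc : ∫ _ in T..t, a = a * (t - T) := by simp [mul_comm]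
    rw [← hc]
    refine intervalIntegral.integral_mono_ae_restrict ht.le (by simp) (good_intble hg hTn ht0) ?_
    refine (ae_restrict_iff' measurableSet_Icc).2 ?_
    have hne : ∀ᵐ x ∂(volume : Measure ℝ), x ≠ 0 := by simp [ae_iff]
    filter_upwards [hae, hne] with x hx hx0 hxt
    exact h x ⟨hT0 x ((le_max_left _ _).trans hxt.1),
      hx (lt_of_le_of_ne (hTn.trans hxt.1) hx0.symm)⟩
  have hlim : Tendsto (fun t : ℝ => ((∫ s in (0:ℝ)..T, g s) + a * (t - T)) / t) atTop (nhds a) := by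
    have h1 : Tendsto (fun t : ℝ => ((∫ s in (0:ℝ)..T, g s) - a * T) / t + a) atTop
        (nhds (0 + a)) := (tendsto_const_nhds.div_atTop tendsto_id).add tendsto_const_nhds
    rw [zero_add] at h1
    refine h1.congr' ?_
    filter_upwards [eventually_gt_atTop (0:ℝ)] with t ht
    field_simp
    ring
  exact le_of_tendsto_of_tendsto (hlim.mono_left hU) hl (hU ((eventually_gt_atTop T).mono hlow))

lemma good_of_meas {g : ℝ → ℝ} (hm : Measurable g) (hb : BddFun g) : g ∈ goodSub := by
  obtain ⟨C, hC⟩ := hb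
  exact ⟨hm.aestronglyMeasurable, C, fun t _ => hC t⟩

/-- If `f : [0,∞) → ℝ` is bounded and continuous and every positive, translation invariant
linear functional `𝕃` on `L∞((0,∞))` lying between the essential liminf and limsup at `+∞`
takes the value `A` on `f` (i.e. `f` is almost convergent to `A`), then the Cesàro means
`(1/t)∫₀^t f(s) ds` converge to `A` as `t → ∞`. -/
theorem almost_convergent_implies_cesaro_convergent (f : ℝ → ℝ) (C : ℝ)
    (hf : ContinuousOn f (Set.Ici 0)) (hbd : ∀ t : ℝ, 0 ≤ t → |f t| ≤ C) (A : ℝ)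
    (hL : ∀ L : (ℝ → ℝ) →ₗ[ℝ] ℝ,
      -- L is positive
      (∀ g : ℝ → ℝ, Measurable g → BddFun g →
        (∀ᵐ x ∂((volume : Measure ℝ).restrict (Set.Ioi 0)), 0 ≤ g x) → 0 ≤ L g) →
      -- L lies between the essential liminf and limsup at +∞
      (∀ g : ℝ → ℝ, Measurable g → BddFun g →
        liminf g (atTop ⊓ ae ((volume : Measure ℝ).restrict (Set.Ioi 0))) ≤ L g ∧
          L g ≤ limsup g (atTop ⊓ ae ((volume : Measure ℝ).restrict (Set.Ioi 0)))) →
      -- L is translation invariant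
      (∀ g : ℝ → ℝ, Measurable g → BddFun g →
        ∀ c : ℝ, 0 < c → L (fun t => g (t + c)) = L g) →
      L f = A) :
    Tendsto (fun t : ℝ => (∫ s in (0:ℝ)..t, f s) / t) atTop (nhds A) := by
  have hfg : f ∈ goodSub :=
    ⟨(hf.mono Set.Ioi_subset_Ici_self).aestronglyMeasurable measurableSet_Ioi, C, hbd⟩
  rw [tendsto_iff_ultrafilter]
  intro U hU
  obtain ⟨L, hLim⟩ := exists_mean U hU
  have key : L f = A := by
    refine hL L ?_ ?_ ?_
    · intro g hm hb hpos
      have hg := good_of_meas hm hb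
      exact good_lower hg hU (hLim g hg) (Filter.Eventually.filter_mono inf_le_right hpos)
    · intro g hm hb
      have hg := good_of_meas hm hb
      obtain ⟨D, hD⟩ := hb
      constructor
      · refine le_of_forall_lt_imp_le_of_dense fun a ha => ?_
        refine good_lower hg hU (hLim g hg) ?_
        refine (eventually_lt_of_lt_liminf ha ?_).mono fun x hx => hx.le
        exact isBoundedUnder_of ⟨-D, fun x => (abs_le.1 (hD x)).1⟩
      · refine le_of_forall_gt_imp_ge_of_dense fun a ha => ?_
        have hn : -g ∈ goodSub := goodSub.neg_mem hg
        have h1 : -a ≤ L (-g) := by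
          refine good_lower hn hU (hLim _ hn) ?_
          refine (eventually_lt_of_limsup_lt ha ?_).mono fun x hx => neg_le_neg hx.le
          exact isBoundedUnder_of ⟨D, fun x => (abs_le.1 (hD x)).2⟩
        rw [map_neg] at h1
        linarith
    · intro g hm hb c hc
      have hg := good_of_meas hm hb
      have hgc : (fun t => g (t + c)) ∈ goodSub := by
        refine good_of_meas (hm.comp (measurable_id.add_const c)) ?_
        obtain ⟨D, hD⟩ := hb
        exact ⟨D, fun x => hD _⟩
      obtain ⟨D, hD⟩ := hb
      have hdiff : Tendsto (fun t => cesMean (fun t => g (t + c)) t - cesMean g t) atTop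
          (nhds 0) := by
        have hz : Tendsto (fun t : ℝ => (2 * D * c) / t) atTop (nhds 0) :=
          tendsto_const_nhds.div_atTop tendsto_id
        refine squeeze_zero_norm' ?_ hz
        filter_upwards [eventually_gt_atTop (0:ℝ)] with t ht
        have e1 : ∫ s in (0:ℝ)..t, g (s + c) = ∫ s in c..(t + c), g s := by
          simp
        have e2 := intervalIntegral.integral_add_adjacent_intervals
          (good_intble hg le_rfl hc.le) (good_intble hg hc.le (add_pos ht hc).le)
        have e3 := intervalIntegral.integral_add_adjacent_intervals
          (good_intble hg le_rfl ht.le) (good_intble hg ht.le (add_pos ht hc).le)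
        have b1 := good_int_bound (fun t _ => hD t) le_rfl hc.le
        have b2 := good_int_bound (fun t _ => hD t) ht.le (add_pos ht hc).le
        rw [sub_zero, abs_of_pos hc] at b1
        rw [add_sub_cancel_left, abs_of_pos hc] at b2
        rw [abs_le] at b1 b2
        rw [cesMean, cesMean, ← sub_div, Real.norm_eq_abs, abs_div, abs_of_pos ht, e1]
        refine div_le_div_of_nonneg_right ?_ ht.le
        rw [abs_le]
        constructor <;> linarith [b1.1, b1.2, b2.1, b2.2]
      have h1 := (hLim _ hgc).sub (hLim g hg)
      exact sub_eq_zero.1 (tendsto_nhds_unique h1 (hdiff.mono_left hU))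
  rw [← key]
  exact hLim f hfg
end

section
/- Let μ : [0,∞) → [0,∞) be nonincreasing, let K > 0 satisfy ∫₀^t μ(s) ds ≤ K·log(1+t) for all t > 0, and set g(t) = (1/log(1+t))∫₀^t μ(s) ds for t > 0. Then for A ∈ ℝ the following are equivalent: (a) ω(g) = A for every linear functional ω on L∞((0,∞)) which is positive (ω(f) ≥ 0 whenever f ≥ 0 a.e.), satisfies ess liminf_{t → +∞} f(t) ≤ ω(f) ≤ ess limsup_{t → +∞} f(t) for every real-valued f ∈ L∞((0,∞)), and is dilation invariant: ω(f(·/c)) = ω(f) for every c > 0; (b) lim_{t → ∞} g(t) = A. -/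
open Filter MeasureTheory

/-- `g(t) = (1/log(1+t)) ∫₀^t μ(s) ds` for `t > 0` (and `0` for `t ≤ 0`). -/
noncomputable def gFn (μ : ℝ → ℝ) : ℝ → ℝ := fun t =>
  if 0 < t then (∫ s in (0:ℝ)..t, μ s) / Real.log (1 + t) else 0

namespace DixAux

theorem int_div (f : ℝ → ℝ) (hf : Measurable f) (hb : BddFun f) {a b : ℝ} (ha : 0 < a) (hb' : 0 < b) :
    IntervalIntegrable (fun t => f t / t) volume a b := by
  obtain ⟨C, hC⟩ := hb
  have h1 : IntervalIntegrable (fun t : ℝ => t⁻¹) volume a b := by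
    apply ContinuousOn.intervalIntegrable
    apply ContinuousOn.inv₀ continuousOn_id
    intro x hx
    have := (lt_min ha hb').trans_le hx.1
    exact this.ne'
  have : (fun t => f t / t) = fun t => f t * t⁻¹ := by
    ext t; rw [div_eq_mul_inv]
  rw [this]
  rw [intervalIntegrable_iff] at h1 ⊢
  exact h1.bdd_mul (c := C) hf.aestronglyMeasurable (Eventually.of_forall hC)

theorem lower (f : ℝ → ℝ) (hf : Measurable f) (hb : BddFun f) {a b C : ℝ} (ha : 0 < a) (hab : a ≤ b)
    (h : ∀ᵐ t ∂(volume : Measure ℝ), a ≤ t → t ≤ b → C ≤ f t) :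
    C * (Real.log b - Real.log a) ≤ ∫ t in a..b, f t / t := by
  have hb' : 0 < b := ha.trans_le hab
  have h1 : ∫ t in a..b, C / t = C * (Real.log b - Real.log a) := by
    simp_rw [div_eq_mul_inv]
    rw [intervalIntegral.integral_const_mul, integral_inv_of_pos ha hb', Real.log_div hb'.ne' ha.ne']
  rw [← h1]
  apply intervalIntegral.integral_mono_ae_restrict hab
  · exact int_div (fun _ => C) measurable_const ⟨|C|, fun _ => le_rfl⟩ ha hb'
  · exact int_div f hf hb ha hb'
  · rw [EventuallyLE, ae_restrict_iff' measurableSet_Icc]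
    filter_upwards [h] with t ht hm
    exact div_le_div_of_nonneg_right (ht hm.1 hm.2) (ha.le.trans hm.1)

theorem bdd_neg {f : ℝ → ℝ} (h : BddFun f) : BddFun (fun t => - f t) := by
  obtain ⟨C, hC⟩ := h
  exact ⟨C, fun x => by rw [abs_neg]; exact hC x⟩

theorem absle (f : ℝ → ℝ) (hf : Measurable f) {C : ℝ} (hC : ∀ x, |f x| ≤ C) {a b : ℝ} (ha : 0 < a)
    (hb : 0 < b) : |∫ t in a..b, f t / t| ≤ C * |Real.log b - Real.log a| := by
  wlog hab : a ≤ b generalizing a b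
  · rw [intervalIntegral.integral_symm, abs_neg, abs_sub_comm]
    exact this hb ha (le_of_not_ge hab)
  have h1 := lower f hf ⟨C, hC⟩ (C := -C) ha hab
    (Eventually.of_forall fun t _ _ => (abs_le.1 (hC t)).1)
  have h2 := lower (fun t => - f t) hf.neg (bdd_neg ⟨C, hC⟩) (C := -C) ha hab
    (Eventually.of_forall fun t _ _ => neg_le_neg (abs_le.1 (hC t)).2)
  have h3 : ∫ t in a..b, -f t / t = - ∫ t in a..b, f t / t := by
    simp_rw [neg_div]
    rw [intervalIntegral.integral_neg]
  rw [h3] at h2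
  rw [abs_of_nonneg (sub_nonneg.2 (Real.log_le_log ha hab)), abs_le]
  constructor <;> linarith

theorem comp_dil (f : ℝ → ℝ) {a b c : ℝ} (hc : 0 < c) :
    ∫ t in a..b, f (t / c) / t = ∫ t in (a / c)..(b / c), f t / t := by
  have := intervalIntegral.integral_comp_div (a := a) (b := b) (fun t => f t / t) hc.ne'
  have h2 : (fun t => f (t / c) / (t / c)) = fun t => c * (f (t / c) / t) := by
    ext t
    by_cases ht : t = 0
    · simp [ht]
    · field_simp
  simp only [h2] at this
  rw [intervalIntegral.integral_const_mul, smul_eq_mul] at this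
  exact mul_left_cancel₀ hc.ne' this

noncomputable def avg (p q : ℝ → ℝ) (f : ℝ → ℝ) (x : ℝ) : ℝ :=
  (∫ t in (Real.exp (p x))..(Real.exp (q x)), f t / t) / (q x - p x)

def bm : Submodule ℝ (ℝ → ℝ) where
  carrier := {f | Measurable f ∧ BddFun f}
  add_mem' := by
    rintro f g ⟨hf, C, hC⟩ ⟨hg, D, hD⟩
    exact ⟨hf.add hg, C + D, fun x => (abs_add_le _ _).trans (add_le_add (hC x) (hD x))⟩
  zero_mem' := ⟨measurable_const, 0, fun x => by simp⟩
  smul_mem' := by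
    rintro c f ⟨hf, C, hC⟩
    refine ⟨hf.const_smul c, |c| * C, fun x => ?_⟩
    simp only [Pi.smul_apply, smul_eq_mul, abs_mul]
    exact mul_le_mul_of_nonneg_left (hC x) (abs_nonneg _)

theorem tendsto_avg (U : Ultrafilter ℝ) (p q : ℝ → ℝ)
    (hq : Tendsto (fun x => q x - p x) U atTop) (f : ℝ → ℝ) (hf : Measurable f) (hb : BddFun f) :
    Tendsto (avg p q f) U (nhds (limUnder (U : Filter ℝ) (avg p q f))) := by
  apply tendsto_nhds_limUnder
  obtain ⟨C, hC⟩ := hb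
  have h1 : ∀ᶠ x in (U : Filter ℝ), avg p q f x ∈ Set.Icc (-C) C := by
    filter_upwards [hq.eventually_gt_atTop 0] with x hx
    have := absle f hf hC (Real.exp_pos (p x)) (Real.exp_pos (q x))
    rw [Real.log_exp, Real.log_exp, abs_of_pos hx] at this
    rw [Set.mem_Icc, ← abs_le, avg, abs_div, abs_of_pos hx, div_le_iff₀ hx]
    exact this
  obtain ⟨y, -, hy⟩ := (isCompact_Icc (a := -C) (b := C)).ultrafilter_le_nhds (U.map (avg p q f))
    (by rw [Ultrafilter.coe_map]; exact le_principal_iff.2 h1)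
  exact ⟨y, hy⟩

theorem exists_omega (U : Ultrafilter ℝ) (p q : ℝ → ℝ) (hp : Tendsto p U atTop)
    (hq : Tendsto (fun x => q x - p x) U atTop) :
    ∃ ω : (ℝ → ℝ) →ₗ[ℝ] ℝ,
      (∀ f : ℝ → ℝ, Measurable f → BddFun f → ∀ C : ℝ,
        (∀ᶠ x in (U : Filter ℝ), ∀ᵐ t ∂(volume : Measure ℝ),
          Real.exp (p x) ≤ t → t ≤ Real.exp (q x) → C ≤ f t) → C ≤ ω f) ∧
      (∀ f : ℝ → ℝ, Measurable f → BddFun f →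
          ∀ c : ℝ, 0 < c → ω (fun t => f (t / c)) = ω f) := by
  have T := tendsto_avg U p q hq
  let ω₀ : bm →ₗ[ℝ] ℝ :=
    { toFun := fun f => limUnder (U : Filter ℝ) (avg p q f.1)
      map_add' := by
        intro f g
        refine tendsto_nhds_unique (T _ (f + g).2.1 (f + g).2.2) ?_
        have := (T _ f.2.1 f.2.2).add (T _ g.2.1 g.2.2)
        refine this.congr fun x => ?_
        simp only [avg, Submodule.coe_add, Pi.add_apply]
        rw [← add_div, ← intervalIntegral.integral_add]
        · simp_rw [add_div]
        · exact int_div _ f.2.1 f.2.2 (Real.exp_pos _) (Real.exp_pos _)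
        · exact int_div _ g.2.1 g.2.2 (Real.exp_pos _) (Real.exp_pos _)
      map_smul' := by
        intro c f
        refine tendsto_nhds_unique (T _ (c • f).2.1 (c • f).2.2) ?_
        have := (T _ f.2.1 f.2.2).const_mul c
        refine this.congr fun x => ?_
        simp only [avg, Submodule.coe_smul, Pi.smul_apply, smul_eq_mul]
        simp_rw [mul_div_assoc]
        rw [intervalIntegral.integral_const_mul, mul_div_assoc] }
  obtain ⟨ω, hω⟩ := LinearMap.exists_extend ω₀
  have key : ∀ f : ℝ → ℝ, Measurable f → BddFun f → Tendsto (avg p q f) U (nhds (ω f)) := by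
    intro f hf hb
    have : ω f = ω₀ ⟨f, hf, hb⟩ := by rw [← hω]; rfl
    rw [this]
    exact T f hf hb
  refine ⟨ω, ?_, ?_⟩
  · intro f hf hb C h
    refine ge_of_tendsto (key f hf hb) ?_
    filter_upwards [h, hq.eventually_gt_atTop 0] with x hx hpos
    have := lower f hf hb (Real.exp_pos (p x)) (Real.exp_le_exp.2 (by linarith : p x ≤ q x)) hx
    rw [Real.log_exp, Real.log_exp] at this
    rw [avg, le_div_iff₀ hpos]
    exact this
  · intro f hf hb c hc
    have hf' : Measurable (fun t => f (t / c)) := hf.comp (measurable_id.div_const c)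
    have hb' : BddFun (fun t => f (t / c)) := by
      obtain ⟨C, hC⟩ := hb
      exact ⟨C, fun x => hC _⟩
    have h1 := (key _ hf' hb').sub (key f hf hb)
    obtain ⟨C, hC⟩ := id hb
    have h2 : Tendsto (fun x => avg p q (fun t => f (t / c)) x - avg p q f x) U (nhds 0) := by
      have h3 : Tendsto (fun x => (2 * C * |Real.log c|) / (q x - p x)) U (nhds 0) :=
        hq.const_div_atTop _
      refine squeeze_zero_norm' ?_ h3
      filter_upwards [hq.eventually_gt_atTop 0] with x hpos
      rw [Real.norm_eq_abs, avg, avg, ← sub_div, abs_div, abs_of_pos hpos]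
      refine div_le_div_of_nonneg_right ?_ hpos.le
      rw [comp_dil f hc]
      have ea := Real.exp_pos (p x)
      have eb := Real.exp_pos (q x)
      set a := Real.exp (p x)
      set b := Real.exp (q x)
      have hac : 0 < a / c := div_pos ea hc
      have hbc : 0 < b / c := div_pos eb hc
      rw [intervalIntegral.integral_interval_sub_interval_comm (int_div f hf hb hac hbc)
        (int_div f hf hb ea eb) (int_div f hf hb hac ea)]
      have k1 := absle f hf hC hac ea
      have k2 := absle f hf hC hbc eb
      rw [Real.log_div ea.ne' hc.ne', sub_sub_cancel] at k1
      rw [Real.log_div eb.ne' hc.ne', sub_sub_cancel] at k2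
      refine (abs_sub _ _).trans ?_
      linarith
    have := tendsto_nhds_unique h1 h2
    linarith

theorem bdd_le {f : ℝ → ℝ} (hb : BddFun f) (F : Filter ℝ) : IsBoundedUnder (· ≤ ·) F f := by
  obtain ⟨C, hC⟩ := hb
  exact isBoundedUnder_of ⟨C, fun x => (abs_le.1 (hC x)).2⟩

theorem bdd_ge {f : ℝ → ℝ} (hb : BddFun f) (F : Filter ℝ) : IsBoundedUnder (· ≥ ·) F f := by
  obtain ⟨C, hC⟩ := hb
  exact isBoundedUnder_of ⟨-C, fun x => (abs_le.1 (hC x)).1⟩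

/-- Package all the properties. -/
theorem exists_omega' (F : Filter ℝ) [F.NeBot] (p q : ℝ → ℝ) (hp : Tendsto p F atTop)
    (hq : Tendsto (fun x => q x - p x) F atTop) :
    ∃ ω : (ℝ → ℝ) →ₗ[ℝ] ℝ,
        (∀ f : ℝ → ℝ, Measurable f → BddFun f →
          (∀ᵐ x ∂((volume : Measure ℝ).restrict (Set.Ioi 0)), 0 ≤ f x) → 0 ≤ ω f) ∧
        (∀ f : ℝ → ℝ, Measurable f → BddFun f →
          liminf f (atTop ⊓ ae ((volume : Measure ℝ).restrict (Set.Ioi 0))) ≤ ω f ∧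
            ω f ≤ limsup f (atTop ⊓ ae ((volume : Measure ℝ).restrict (Set.Ioi 0)))) ∧
        (∀ f : ℝ → ℝ, Measurable f → BddFun f →
          ∀ c : ℝ, 0 < c → ω (fun t => f (t / c)) = ω f) ∧
        (∀ f : ℝ → ℝ, Measurable f → BddFun f → ∀ C : ℝ,
          (∀ᶠ x in F, ∀ t, Real.exp (p x) ≤ t → t ≤ Real.exp (q x) → C ≤ f t) → C ≤ ω f) := by
  have hU := Ultrafilter.of_le F
  have hp' := hp.mono_left hU
  have hq' := hq.mono_left hU
  obtain ⟨ω, h1, h2⟩ := exists_omega (Ultrafilter.of F) p q hp' hq'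
  have h3 : ∀ f : ℝ → ℝ, Measurable f → BddFun f → ∀ C : ℝ,
      (∀ᶠ x in (atTop ⊓ ae ((volume : Measure ℝ).restrict (Set.Ioi 0))), C ≤ f x) → C ≤ ω f := by
    intro f hf hb C hC
    apply h1 f hf hb
    rw [Filter.eventually_inf] at hC
    obtain ⟨s, hs, t, ht, hst⟩ := hC
    obtain ⟨N, hN⟩ := mem_atTop_sets.1 hs
    have ht' : ∀ᵐ x ∂((volume : Measure ℝ).restrict (Set.Ioi 0)), x ∈ t := ht
    rw [ae_restrict_iff' measurableSet_Ioi] at ht'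
    filter_upwards [hp'.eventually_ge_atTop N] with x hx
    filter_upwards [ht'] with y hy hy1 _
    have e1 := Real.add_one_le_exp (p x)
    exact hst y ⟨hN y (by linarith), hy (lt_of_lt_of_le (Real.exp_pos _) hy1)⟩
  refine ⟨ω, ?_, ?_, h2, ?_⟩
  · intro f hf hb h
    exact h3 f hf hb 0 (Filter.Eventually.filter_mono inf_le_right h)
  · intro f hf hb
    constructor
    · refine le_of_forall_lt fun C hC => ?_
      obtain ⟨D, hCD, hD⟩ := exists_between hC
      refine hCD.trans_le (h3 f hf hb D ?_)
      exact (eventually_lt_of_lt_liminf hD (bdd_ge hb _)).mono fun _ h => h.le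
    · refine le_of_forall_gt fun C hC => ?_
      obtain ⟨D, hCD, hD⟩ := exists_between hC
      have := h3 (-f) hf.neg (bdd_neg hb) (-D)
        ((eventually_lt_of_limsup_lt hCD (bdd_le hb _)).mono fun _ h => neg_le_neg h.le)
      rw [map_neg] at this
      linarith
  · intro f hf hb C h
    apply h1 f hf hb C
    exact (h.filter_mono hU).mono fun x hx => Eventually.of_forall hx

instance neBotF : NeBot (atTop ⊓ ae ((volume : Measure ℝ).restrict (Set.Ioi 0))) := by
  rw [Filter.inf_neBot_iff]
  intro s hs t ht
  obtain ⟨N, hN⟩ := mem_atTop_sets.1 hs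
  have ht' : ∀ᵐ x ∂((volume : Measure ℝ).restrict (Set.Ioi 0)), x ∈ t := ht
  rw [ae_restrict_iff' measurableSet_Ioi] at ht'
  by_contra hne
  have h0 : (volume : Measure ℝ) (Set.Ioi (max N 0)) = 0 := by
    refine measure_mono_null ?_ ht'
    intro x hx hxt
    rw [Set.mem_Ioi, max_lt_iff] at hx
    exact hne ⟨x, hN x hx.1.le, hxt hx.2⟩
  simp at h0

section g
variable {μ : ℝ → ℝ} (hμ0 : ∀ s : ℝ, 0 ≤ s → 0 ≤ μ s) (hmono : AntitoneOn μ (Set.Ici 0))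
    {K : ℝ} (hK : 0 < K)
    (hint : ∀ t : ℝ, 0 < t → (∫ s in (0:ℝ)..t, μ s) ≤ K * Real.log (1 + t))

theorem mu_int (hmono : AntitoneOn μ (Set.Ici 0)) {a b : ℝ} (ha : 0 ≤ a) (hb : 0 ≤ b) :
    IntervalIntegrable μ volume a b := by
  apply AntitoneOn.intervalIntegrable
  exact hmono.mono fun x hx => (le_min ha hb).trans hx.1

theorem M_mono (hμ0 : ∀ s : ℝ, 0 ≤ s → 0 ≤ μ s) (hmono : AntitoneOn μ (Set.Ici 0)) {a b : ℝ}
    (ha : 0 ≤ a) (hab : a ≤ b) : ∫ s in (0:ℝ)..a, μ s ≤ ∫ s in (0:ℝ)..b, μ s := by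
  rw [← intervalIntegral.integral_add_adjacent_intervals (mu_int hmono le_rfl ha)
    (mu_int hmono ha (ha.trans hab))]
  have := intervalIntegral.integral_nonneg (μ := volume) hab
    (fun u hu => hμ0 u (ha.trans hu.1))
  linarith

theorem g_meas (hμ0 : ∀ s : ℝ, 0 ≤ s → 0 ≤ μ s) (hmono : AntitoneOn μ (Set.Ici 0)) :
    Measurable (gFn μ) := by
  have : gFn μ = fun t => if 0 < t then (∫ s in (0:ℝ)..(max t 0), μ s) / Real.log (1 + t) else 0 := by
    ext t
    unfold gFn
    split_ifs with h
    · rw [max_eq_left h.le]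
    · rfl
  rw [this]
  have hm : Monotone fun t : ℝ => ∫ s in (0:ℝ)..(max t 0), μ s := fun a b hab =>
    M_mono hμ0 hmono (le_max_right _ _) (max_le_max_right _ hab)
  refine Measurable.ite measurableSet_Ioi (hm.measurable.div ?_) measurable_const
  exact Real.measurable_log.comp (measurable_const.add measurable_id)

theorem g_bdd (hμ0 : ∀ s : ℝ, 0 ≤ s → 0 ≤ μ s) (hK : 0 < K)
    (hint : ∀ t : ℝ, 0 < t → (∫ s in (0:ℝ)..t, μ s) ≤ K * Real.log (1 + t)) : BddFun (gFn μ) := by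
  refine ⟨K, fun t => ?_⟩
  unfold gFn
  split_ifs with h
  · have hl : 0 < Real.log (1 + t) := Real.log_pos (by linarith)
    have h0 := intervalIntegral.integral_nonneg (μ := volume) h.le (fun u hu => hμ0 u hu.1)
    rw [abs_of_nonneg (div_nonneg h0 hl.le), div_le_iff₀ hl]
    exact hint t h
  · simpa using hK.le

theorem g_slow (hμ0 : ∀ s : ℝ, 0 ≤ s → 0 ≤ μ s) (hmono : AntitoneOn μ (Set.Ici 0)) (hK : 0 < K)
    (hint : ∀ t : ℝ, 0 < t → (∫ s in (0:ℝ)..t, μ s) ≤ K * Real.log (1 + t))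
    {s t : ℝ} (hs : 0 < s) (hst : s ≤ t) :
    gFn μ s - gFn μ t ≤ K * (Real.log t - Real.log s) / Real.log (1 + t) := by
  have ht := hs.trans_le hst
  unfold gFn
  rw [if_pos hs, if_pos ht]
  have hls : 0 < Real.log (1 + s) := Real.log_pos (by linarith)
  have hlt : 0 < Real.log (1 + t) := Real.log_pos (by linarith)
  have hM := M_mono hμ0 hmono hs.le hst
  have hi := hint s hs
  have hq : (1 + t) / (1 + s) ≤ t / s := by
    rw [div_le_div_iff₀ (by linarith) hs]; nlinarith
  have hlog := Real.log_le_log (by positivity) hq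
  rw [Real.log_div (by positivity) (by positivity), Real.log_div (by positivity) (by positivity)] at hlog
  have hle : Real.log (1 + s) ≤ Real.log (1 + t) := Real.log_le_log (by linarith) (by linarith)
  set M := ∫ s in (0:ℝ)..s, μ s
  set N := ∫ s in (0:ℝ)..t, μ s
  set S := Real.log (1 + s)
  set T := Real.log (1 + t)
  have h1 : M / S ≤ K := by rwa [div_le_iff₀ hls]
  have h2 : M / S - N / T ≤ M / S - M / T := by
    have := div_le_div_of_nonneg_right hM hlt.le
    linarith
  refine h2.trans ?_
  have h3 : M / S - M / T = (M / S) * (T - S) / T := by field_simp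
  rw [h3]
  refine div_le_div_of_nonneg_right ?_ hlt.le
  calc M / S * (T - S) ≤ K * (T - S) := mul_le_mul_of_nonneg_right h1 (by linarith)
    _ ≤ _ := mul_le_mul_of_nonneg_left hlog hK.le

end g

theorem tendsto_sub_sqrt : Tendsto (fun y : ℝ => y - √y) atTop atTop := by
  refine tendsto_atTop_mono' _ ?_ Real.tendsto_sqrt_atTop
  filter_upwards [eventually_ge_atTop 4] with y hy
  have h2 : (2:ℝ) ≤ √y := Real.le_sqrt_of_sq_le (by linarith)
  have := Real.mul_self_sqrt (by linarith : 0 ≤ y)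
  nlinarith

end DixAux

open DixAux
/-- For a nonincreasing `μ : [0,∞) → [0,∞)` with `∫₀^t μ ≤ K log(1+t)` and
`g(t) = (1/log(1+t))∫₀^t μ(s) ds`, the following are equivalent: (a) `ω(g) = A` for every
positive dilation-invariant linear functional `ω` on `L∞((0,∞))` lying between the essential
liminf and limsup at `+∞`; (b) `lim_{t→∞} g(t) = A`. -/
theorem dixmier_measurable_iff_cesaro_limit (μ : ℝ → ℝ)
    (hμ0 : ∀ s : ℝ, 0 ≤ s → 0 ≤ μ s) (hmono : AntitoneOn μ (Set.Ici 0))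
    (K : ℝ) (hK : 0 < K)
    (hint : ∀ t : ℝ, 0 < t → (∫ s in (0:ℝ)..t, μ s) ≤ K * Real.log (1 + t))
    (A : ℝ) :
    (∀ ω : (ℝ → ℝ) →ₗ[ℝ] ℝ,
        -- ω is positive
        (∀ f : ℝ → ℝ, Measurable f → BddFun f →
          (∀ᵐ x ∂((volume : Measure ℝ).restrict (Set.Ioi 0)), 0 ≤ f x) → 0 ≤ ω f) →
        -- ω lies between the essential liminf and limsup at +∞
        (∀ f : ℝ → ℝ, Measurable f → BddFun f →
          liminf f (atTop ⊓ ae ((volume : Measure ℝ).restrict (Set.Ioi 0))) ≤ ω f ∧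
            ω f ≤ limsup f (atTop ⊓ ae ((volume : Measure ℝ).restrict (Set.Ioi 0)))) →
        -- ω is dilation invariant
        (∀ f : ℝ → ℝ, Measurable f → BddFun f →
          ∀ c : ℝ, 0 < c → ω (fun t => f (t / c)) = ω f) →
        ω (gFn μ) = A) ↔
      Tendsto (gFn μ) atTop (nhds A) := by
  have gm := g_meas hμ0 hmono
  have gb := g_bdd hμ0 hK hint
  constructor
  · intro h
    rw [Metric.tendsto_atTop']
    by_contra hne
    push Not at hne
    obtain ⟨ε, hε, hfr⟩ := hne
    have hsq : Tendsto (fun t : ℝ => √(Real.log t)) atTop atTop :=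
      Real.tendsto_sqrt_atTop.comp Real.tendsto_log_atTop
    have hsm : ∀ᶠ t : ℝ in atTop, K / √(Real.log t) < ε / 2 :=
      (hsq.const_div_atTop K).eventually_lt_const (half_pos hε)
    have hfr' : ∃ᶠ t in atTop, A + ε ≤ gFn μ t ∨ gFn μ t ≤ A - ε := by
      rw [frequently_atTop']
      intro N
      obtain ⟨n, hn, hd⟩ := hfr N
      refine ⟨n, hn, ?_⟩
      rw [Real.dist_eq, le_abs] at hd
      rcases hd with hd | hd
      · left; linarith
      · right; linarith
    rcases frequently_or_distrib.1 hfr' with hf | hf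
    · have : NeBot (atTop ⊓ 𝓟 {t | A + ε ≤ gFn μ t}) := frequently_iff_neBot.1 hf
      obtain ⟨ω, w1, w2, w3, w4⟩ := exists_omega' (atTop ⊓ 𝓟 {t | A + ε ≤ gFn μ t})
        (fun t => Real.log t) (fun t => Real.log t + √(Real.log t))
        (Real.tendsto_log_atTop.mono_left inf_le_left)
        ((hsq.mono_left inf_le_left).congr fun t => by ring)
      have e := h ω w1 w2 w3
      have := w4 _ gm gb (A + ε / 2) (by
        filter_upwards [mem_inf_of_left hsm, mem_inf_of_left (eventually_gt_atTop 1),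
          mem_inf_of_right (mem_principal_self _)] with t h1 h2 h3 s hs1 hs2
        change _ < _ at h2
        have tpos : 0 < t := by linarith
        rw [Real.exp_log tpos] at hs1
        have spos := tpos.trans_le hs1
        have hl := Real.log_le_log spos hs2
        rw [Real.log_exp] at hl
        have sl := g_slow hμ0 hmono hK hint tpos hs1
        have lp : 0 < Real.log t := Real.log_pos h2
        have l2 : Real.log t ≤ Real.log (1 + s) := Real.log_le_log tpos (by linarith)
        have : K * (Real.log s - Real.log t) / Real.log (1 + s) ≤ K / √(Real.log t) := by
          rw [div_le_div_iff₀ (lp.trans_le l2) (Real.sqrt_pos.2 lp), mul_assoc]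
          apply mul_le_mul_of_nonneg_left _ hK.le
          have := mul_le_mul_of_nonneg_right (by linarith : Real.log s - Real.log t ≤ √(Real.log t))
            (Real.sqrt_nonneg (Real.log t))
          rw [Real.mul_self_sqrt lp.le] at this
          linarith
        linarith)
      linarith
    · have : NeBot (atTop ⊓ 𝓟 {t | gFn μ t ≤ A - ε}) := frequently_iff_neBot.1 hf
      obtain ⟨ω, w1, w2, w3, w4⟩ := exists_omega' (atTop ⊓ 𝓟 {t | gFn μ t ≤ A - ε})
        (fun t => Real.log t - √(Real.log t)) (fun t => Real.log t)
        ((tendsto_sub_sqrt.comp Real.tendsto_log_atTop).mono_left inf_le_left)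
        ((hsq.mono_left inf_le_left).congr fun t => by ring)
      have e := h ω w1 w2 w3
      have := w4 (-gFn μ) gm.neg (bdd_neg gb) (-(A - ε / 2)) (by
        filter_upwards [mem_inf_of_left hsm, mem_inf_of_left (eventually_gt_atTop 1),
          mem_inf_of_right (mem_principal_self _)] with t h1 h2 h3 s hs1 hs2
        change _ < _ at h2
        have tpos : 0 < t := by linarith
        rw [Real.exp_log tpos] at hs2
        have spos := (Real.exp_pos _).trans_le hs1
        have hl := Real.log_le_log (Real.exp_pos _) hs1
        rw [Real.log_exp] at hl
        have sl := g_slow hμ0 hmono hK hint spos hs2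
        have lp : 0 < Real.log t := Real.log_pos h2
        have l2 : Real.log t ≤ Real.log (1 + t) := Real.log_le_log tpos (by linarith)
        have : K * (Real.log t - Real.log s) / Real.log (1 + t) ≤ K / √(Real.log t) := by
          rw [div_le_div_iff₀ (lp.trans_le l2) (Real.sqrt_pos.2 lp), mul_assoc]
          apply mul_le_mul_of_nonneg_left _ hK.le
          have := mul_le_mul_of_nonneg_right (by linarith : Real.log t - Real.log s ≤ √(Real.log t))
            (Real.sqrt_nonneg (Real.log t))
          rw [Real.mul_self_sqrt lp.le] at this
          linarith
        simp only [Pi.neg_apply]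
        linarith)
      rw [map_neg] at this
      linarith
  · intro h ω _ w2 _
    obtain ⟨h1, h2⟩ := w2 _ gm gb
    have h' := h.mono_left
      (inf_le_left : atTop ⊓ ae ((volume : Measure ℝ).restrict (Set.Ioi 0)) ≤ atTop)
    rw [h'.liminf_eq] at h1
    rw [h'.limsup_eq] at h2
    exact le_antisymm h2 h1
end

section
/- Let μ : [0,∞) → [0,∞) be nonincreasing, let K > 0 satisfy ∫₀^t μ(s) ds ≤ K·log(1+t) for all t > 0, and set g(t) = (1/log(1+t))∫₀^t μ(s) ds for t > 0, g(0) = 0; g is a bounded continuous function on [0,∞). Define Mg ∈ C_b[0,∞) by (Mg)(t) = (1/log t)∫₁^t g(s) ds/s for t > 1 and (Mg)(t) = g(1) for 0 ≤ t ≤ 1. Then for A ∈ ℝ the following are equivalent: (a) γ(Mg) = A for every positive linear functional γ on C_b[0,∞) with γ(1) = 1 which vanishes on every continuous function vanishing at infinity; (b) lim_{t → ∞} g(t) = A. -/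
open Filter MeasureTheory

/-- `(Mg)(t) = (1/log t) ∫₁^t g(s) ds/s` for `t > 1`, and `(Mg)(t) = g(1)` for `t ≤ 1`. -/
noncomputable def MgFn (μ : ℝ → ℝ) : ℝ → ℝ := fun t =>
  if 1 < t then (∫ s in (1:ℝ)..t, gFn μ s / s) / Real.log t else gFn μ 1

lemma cd_exists_ulim (U : Ultrafilter ℝ) (hU : (U : Filter ℝ) ≤ atTop) (h : ℝ → ℝ) (B : ℝ)
    (hB : ∀ x : ℝ, 0 ≤ x → |h x| ≤ B) : ∃ L, Tendsto h U (nhds L) := by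
  have hc : IsCompact (Set.Icc (-B) B) := isCompact_Icc
  have hm : ∀ᶠ x in (U : Filter ℝ), h x ∈ Set.Icc (-B) B :=
    hU ((eventually_ge_atTop 0).mono fun x hx => abs_le.1 (hB x hx))
  obtain ⟨L, -, hL⟩ := hc.ultrafilter_le_nhds (U.map h) (Filter.le_principal_iff.2 hm)
  exact ⟨L, hL⟩

/-- There is a linear functional on all functions extending the limit along `U`. -/
lemma cd_exists_functional (U : Ultrafilter ℝ) :
    ∃ γ : (ℝ → ℝ) →ₗ[ℝ] ℝ, ∀ h L, Tendsto h U (nhds L) → γ h = L := by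
  let V : Submodule ℝ (ℝ → ℝ) :=
    { carrier := {h | ∃ L, Tendsto h U (nhds L)}
      add_mem' := by
        rintro a b ⟨x, hx⟩ ⟨y, hy⟩
        exact ⟨x + y, hx.add hy⟩
      zero_mem' := ⟨0, tendsto_const_nhds⟩
      smul_mem' := by
        rintro c a ⟨x, hx⟩
        exact ⟨c • x, hx.const_smul c⟩ }
  have hV : ∀ v : V, ∃ L, Tendsto (v : ℝ → ℝ) U (nhds L) := fun v => v.2
  choose l hl using hV
  let f : V →ₗ[ℝ] ℝ :=
    { toFun := l
      map_add' := fun a b => tendsto_nhds_unique (hl (a + b)) ((hl a).add (hl b))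
      map_smul' := fun c a => tendsto_nhds_unique (hl (c • a)) ((hl a).const_smul c) }
  obtain ⟨γ, hγ⟩ := f.exists_extend
  refine ⟨γ, fun h L hL => ?_⟩
  have h1 : γ h = l ⟨h, L, hL⟩ := LinearMap.congr_fun hγ ⟨h, L, hL⟩
  rw [h1]
  exact tendsto_nhds_unique (hl ⟨h, L, hL⟩) hL

lemma cd_tendsto_of_states (f : ℝ → ℝ) (B A : ℝ) (hB : ∀ x : ℝ, 0 ≤ x → |f x| ≤ B)
    (H : ∀ γ : (ℝ → ℝ) →ₗ[ℝ] ℝ,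
        (∀ h : ℝ → ℝ, ContinuousOn h (Set.Ici 0) → (∃ B : ℝ, ∀ x : ℝ, 0 ≤ x → |h x| ≤ B) →
          (∀ x : ℝ, 0 ≤ x → 0 ≤ h x) → 0 ≤ γ h) →
        γ (fun _ => 1) = 1 →
        (∀ h : ℝ → ℝ, ContinuousOn h (Set.Ici 0) → Tendsto h atTop (nhds 0) → γ h = 0) →
        γ f = A) : Tendsto f atTop (nhds A) := by
  rw [tendsto_iff_ultrafilter]
  intro U hU
  obtain ⟨γ, hγ⟩ := cd_exists_functional U
  obtain ⟨L, hL⟩ := cd_exists_ulim U hU f B hB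
  have hA : γ f = A := by
    refine H γ ?_ (hγ _ _ tendsto_const_nhds) fun h _ h0 => hγ _ _ (h0.mono_left hU)
    rintro h - ⟨C, hC⟩ hpos
    obtain ⟨M, hM⟩ := cd_exists_ulim U hU h C hC
    rw [hγ _ _ hM]
    exact ge_of_tendsto hM (hU ((eventually_ge_atTop 0).mono fun x hx => hpos x hx))
  rw [← hA, hγ _ _ hL]
  exact hL

lemma cd_int (g : ℝ → ℝ) (hg : ContinuousOn g (Set.Ioi 0)) {a b : ℝ} (ha : 0 < a) (hb : 0 < b) :
    IntervalIntegrable (fun s => g s / s) volume a b := by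
  apply ContinuousOn.intervalIntegrable
  have hs : Set.uIcc a b ⊆ Set.Ioi 0 := fun x hx => lt_of_lt_of_le (lt_min ha hb) hx.1
  exact (hg.mono hs).div continuousOn_id fun x hx => ne_of_gt (hs hx)

lemma cd_int_const (c : ℝ) {a b : ℝ} (ha : 0 < a) (hb : 0 < b) :
    ∫ s in a..b, c / s = c * (Real.log b - Real.log a) := by
  simp_rw [div_eq_mul_inv]
  rw [intervalIntegral.integral_const_mul, integral_inv_of_pos ha hb,
    Real.log_div hb.ne' ha.ne']

lemma cd_int_le (g : ℝ → ℝ) (hg : ContinuousOn g (Set.Ioi 0)) {a b c : ℝ} (ha : 0 < a)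
    (hab : a ≤ b) (h : ∀ s, a ≤ s → s ≤ b → g s ≤ c) :
    ∫ s in a..b, g s / s ≤ c * (Real.log b - Real.log a) := by
  rw [← cd_int_const c ha (ha.trans_le hab)]
  refine intervalIntegral.integral_mono_on hab (cd_int g hg ha (ha.trans_le hab))
    (cd_int (fun _ => c) continuousOn_const ha (ha.trans_le hab)) fun s hs => ?_
  have : 0 < s := ha.trans_le hs.1
  have := h s hs.1 hs.2
  gcongr

lemma cd_le_int (g : ℝ → ℝ) (hg : ContinuousOn g (Set.Ioi 0)) {a b c : ℝ} (ha : 0 < a)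
    (hab : a ≤ b) (h : ∀ s, a ≤ s → s ≤ b → c ≤ g s) :
    c * (Real.log b - Real.log a) ≤ ∫ s in a..b, g s / s := by
  rw [← cd_int_const c ha (ha.trans_le hab)]
  refine intervalIntegral.integral_mono_on hab
    (cd_int (fun _ => c) continuousOn_const ha (ha.trans_le hab))
    (cd_int g hg ha (ha.trans_le hab)) fun s hs => ?_
  have : 0 < s := ha.trans_le hs.1
  have := h s hs.1 hs.2
  gcongr

lemma cd_cesaro (g : ℝ → ℝ) (hg : ContinuousOn g (Set.Ioi 0)) (A : ℝ)
    (h : Tendsto g atTop (nhds A)) :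
    Tendsto (fun t => (∫ s in (1:ℝ)..t, g s / s) / Real.log t) atTop (nhds A) := by
  have key : ∀ (T c : ℝ), Tendsto (fun t => ((∫ s in (1:ℝ)..T, g s / s) - c * Real.log T)
      / Real.log t + c) atTop (nhds c) := by
    intro T c
    simpa using (Real.tendsto_log_atTop.const_div_atTop
      ((∫ s in (1:ℝ)..T, g s / s) - c * Real.log T)).add_const c
  rw [tendsto_order]
  constructor
  · intro b hb
    obtain ⟨c, hbc, hc⟩ := exists_between hb
    obtain ⟨T, hT⟩ := eventually_atTop.1 (h.eventually (lt_mem_nhds hc))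
    have hT1 : 0 < max T 1 := by positivity
    filter_upwards [(key (max T 1) c).eventually (lt_mem_nhds hbc), eventually_gt_atTop (max T 1)]
      with t h1 h2
    have ht : 1 < t := (le_max_right _ _).trans_lt h2
    have hl := Real.log_pos ht
    refine h1.trans_le ?_
    have := cd_le_int g hg hT1 h2.le (c := c)
      fun s hs _ => (hT s ((le_max_left _ _).trans hs)).le
    rw [← intervalIntegral.integral_add_adjacent_intervals (cd_int g hg one_pos hT1)
      (cd_int g hg hT1 (hT1.trans h2)), div_add' _ _ _ hl.ne']
    refine div_le_div_of_nonneg_right ?_ hl.le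
    linarith
  · intro b hb
    obtain ⟨c, hc, hbc⟩ := exists_between hb
    obtain ⟨T, hT⟩ := eventually_atTop.1 (h.eventually (gt_mem_nhds hc))
    have hT1 : 0 < max T 1 := by positivity
    filter_upwards [(key (max T 1) c).eventually (gt_mem_nhds hbc), eventually_gt_atTop (max T 1)]
      with t h1 h2
    have ht : 1 < t := (le_max_right _ _).trans_lt h2
    have hl := Real.log_pos ht
    refine lt_of_le_of_lt ?_ h1
    have := cd_int_le g hg hT1 h2.le (c := c)
      fun s hs _ => (hT s ((le_max_left _ _).trans hs)).le
    rw [← intervalIntegral.integral_add_adjacent_intervals (cd_int g hg one_pos hT1)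
      (cd_int g hg hT1 (hT1.trans h2)), div_add' _ _ _ hl.ne']
    refine div_le_div_of_nonneg_right ?_ hl.le
    linarith

lemma cd_log_ratio : Tendsto (fun t : ℝ => Real.log (1 + t) / Real.log t) atTop (nhds 1) := by
  have h : Tendsto (fun t : ℝ => Real.log 2 / Real.log t + 1) atTop (nhds 1) := by
    simpa using (Real.tendsto_log_atTop.const_div_atTop (Real.log 2)).add_const 1
  refine tendsto_of_tendsto_of_tendsto_of_le_of_le' tendsto_const_nhds h ?_ ?_
  · filter_upwards [eventually_gt_atTop 1] with t ht
    rw [one_le_div (Real.log_pos ht)]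
    exact Real.log_le_log (by linarith) (by linarith)
  · filter_upwards [eventually_gt_atTop 1] with t ht
    have hl := Real.log_pos ht
    rw [div_add' _ _ _ hl.ne']
    gcongr
    rw [one_mul, ← Real.log_mul (by norm_num) (by linarith)]
    exact Real.log_le_log (by linarith) (by linarith)

lemma cd_log_ratio_pow (c : ℝ) (hc : 0 < c) :
    Tendsto (fun t : ℝ => Real.log (1 + t ^ c) / Real.log (1 + t)) atTop (nhds c) := by
  have h1 := cd_log_ratio.comp (tendsto_rpow_atTop hc)
  have h2 := (h1.mul_const c).div cd_log_ratio one_ne_zero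
  rw [one_mul, div_one] at h2
  refine h2.congr' ?_
  filter_upwards [eventually_gt_atTop 1] with t ht
  have hl := Real.log_pos ht
  have hl' : 0 < Real.log (1 + t) := Real.log_pos (by linarith)
  simp only [Function.comp, Pi.div_apply]
  rw [Real.log_rpow (by linarith)]
  field_simp

/-- Tauberian step. -/
lemma cd_tauber (g F : ℝ → ℝ) (hg : ContinuousOn g (Set.Ioi 0))
    (hF : ∀ s t, 0 ≤ s → s ≤ t → F s ≤ F t) (hF0 : ∀ s, 0 ≤ s → 0 ≤ F s)
    (hgF : ∀ t, 0 < t → g t = F t / Real.log (1 + t)) (A : ℝ)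
    (h : Tendsto (fun t => (∫ s in (1:ℝ)..t, g s / s) / Real.log t) atTop (nhds A)) :
    Tendsto g atTop (nhds A) := by
  have hpow : ∀ c : ℝ, 0 < c → Tendsto (fun t : ℝ => (∫ s in (1:ℝ)..(t ^ c), g s / s) / Real.log t)
      atTop (nhds (c * A)) := by
    intro c hc
    refine ((h.comp (tendsto_rpow_atTop hc)).const_mul c).congr' ?_
    filter_upwards [eventually_gt_atTop 1] with t ht
    have hl := Real.log_pos ht
    simp only [Function.comp]
    rw [Real.log_rpow (by linarith)]
    field_simp
  -- the comparison function
  have hcmp : ∀ c : ℝ, 0 < c → c ≠ 1 → Tendsto (fun t : ℝ =>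
      ((∫ s in (1:ℝ)..(t ^ c), g s / s) / Real.log t - (∫ s in (1:ℝ)..t, g s / s) / Real.log t)
        / (c - 1) * (Real.log (1 + t ^ c) / Real.log (1 + t))) atTop (nhds (c * A)) := by
    intro c hc hc1
    have h3 := (((hpow c hc).sub h).div_const (c - 1)).mul (cd_log_ratio_pow c hc)
    have : (c * A - A) / (c - 1) * c = c * A := by
      have : c - 1 ≠ 0 := sub_ne_zero.2 hc1
      field_simp
    rwa [this] at h3
  have hdiff : ∀ c t : ℝ, 1 < t →
      (∫ s in (1:ℝ)..(t ^ c), g s / s) / Real.log t - (∫ s in (1:ℝ)..t, g s / s) / Real.log t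
        = (∫ s in t..(t ^ c), g s / s) / Real.log t := by
    intro c t ht
    have ht0 : 0 < t := by linarith
    rw [← sub_div, intervalIntegral.integral_interval_sub_left
      (cd_int g hg one_pos (Real.rpow_pos_of_pos ht0 c)) (cd_int g hg one_pos ht0)]
  have hcl : Tendsto (fun c : ℝ => c * A) (nhds 1) (nhds A) := by
    have h5 : Continuous (fun c : ℝ => c * A) := by fun_prop
    simpa using h5.tendsto (1:ℝ)
  rw [tendsto_order]
  constructor
  · intro b hb
    have e1 : ∀ᶠ c in nhdsWithin (1:ℝ) (Set.Iio 1), b < c * A ∧ 0 < c :=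
      nhdsWithin_le_nhds ((hcl.eventually (lt_mem_nhds hb)).and (lt_mem_nhds one_pos))
    obtain ⟨c, ⟨hbc, hc0⟩, hc1⟩ := (e1.and self_mem_nhdsWithin).exists
    have hc1 : c < 1 := hc1
    filter_upwards [(hcmp c hc0 hc1.ne).eventually (lt_mem_nhds hbc), eventually_gt_atTop 1]
      with t h1 ht
    refine h1.trans_le ?_
    have ht0 : 0 < t := by linarith
    have hl := Real.log_pos ht
    have hl' : 0 < Real.log (1 + t) := Real.log_pos (by linarith)
    have hp : 0 < t ^ c := Real.rpow_pos_of_pos ht0 c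
    have hlp : 0 < Real.log (1 + t ^ c) := Real.log_pos (by linarith)
    have hle : t ^ c ≤ t := by
      simpa using Real.rpow_le_rpow_of_exponent_le ht.le hc1.le
    rw [hdiff c t ht, hgF t ht0, intervalIntegral.integral_symm]
    have := cd_int_le g hg hp hle (c := F t / Real.log (1 + t ^ c)) (fun s hs hs' => by
      rw [hgF s (hp.trans_le hs)]
      have := hF s t (hp.le.trans hs) hs'
      have := hF0 t ht0.le
      have : Real.log (1 + t ^ c) ≤ Real.log (1 + s) :=
        Real.log_le_log (by linarith) (by linarith)
      gcongr)
    rw [Real.log_rpow ht0] at this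
    set I := ∫ s in t ^ c..t, g s / s
    have hcc : 0 < 1 - c := by linarith
    have e : -I / Real.log t / (c - 1) * (Real.log (1 + t ^ c) / Real.log (1 + t))
        = I * (Real.log (1 + t ^ c) / (Real.log t * (1 - c) * Real.log (1 + t))) := by
      have : c - 1 ≠ 0 := by linarith
      rw [show 1 - c = -(c - 1) by ring]
      field_simp
    rw [e]
    calc _ ≤ F t / Real.log (1 + t ^ c) * (Real.log t - c * Real.log t) *
          (Real.log (1 + t ^ c) / (Real.log t * (1 - c) * Real.log (1 + t))) := by gcongr
      _ = _ := by
        rw [show Real.log t - c * Real.log t = Real.log t * (1 - c) by ring]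
        field_simp
  · intro b hb
    have e1 : ∀ᶠ c in nhdsWithin (1:ℝ) (Set.Ioi 1), c * A < b :=
      nhdsWithin_le_nhds (hcl.eventually (gt_mem_nhds hb))
    obtain ⟨c, hbc, hc1⟩ := (e1.and self_mem_nhdsWithin).exists
    have hc1 : 1 < c := hc1
    have hc0 : 0 < c := by linarith
    filter_upwards [(hcmp c hc0 hc1.ne').eventually (gt_mem_nhds hbc), eventually_gt_atTop 1]
      with t h1 ht
    refine lt_of_le_of_lt ?_ h1
    have ht0 : 0 < t := by linarith
    have hl := Real.log_pos ht
    have hl' : 0 < Real.log (1 + t) := Real.log_pos (by linarith)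
    have hp : 0 < t ^ c := Real.rpow_pos_of_pos ht0 c
    have hlp : 0 < Real.log (1 + t ^ c) := Real.log_pos (by linarith)
    have hle : t ≤ t ^ c := by
      simpa using Real.rpow_le_rpow_of_exponent_le ht.le hc1.le
    rw [hdiff c t ht, hgF t ht0]
    have := cd_le_int g hg ht0 hle (c := F t / Real.log (1 + t ^ c)) (fun s hs hs' => by
      have hs0 := ht0.trans_le hs
      rw [hgF s hs0]
      have := hF t s ht0.le hs
      have := hF0 s hs0.le
      have : 0 < Real.log (1 + s) := Real.log_pos (by linarith)
      have : Real.log (1 + s) ≤ Real.log (1 + t ^ c) :=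
        Real.log_le_log (by linarith) (by linarith)
      gcongr)
    rw [Real.log_rpow ht0] at this
    have hcc : 0 < c - 1 := by linarith
    calc _ = F t / Real.log (1 + t ^ c) * (c * Real.log t - Real.log t) / Real.log t / (c - 1) *
          (Real.log (1 + t ^ c) / Real.log (1 + t)) := by
          rw [show c * Real.log t - Real.log t = Real.log t * (c - 1) by ring]
          field_simp
      _ ≤ _ := by gcongr

/-- Continuity of the logarithmic mean. -/
lemma cd_cont (g : ℝ → ℝ) (hg : ContinuousOn g (Set.Ioi 0)) :
    ContinuousOn (fun t => if 1 < t then (∫ s in (1:ℝ)..t, g s / s) / Real.log t else g 1)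
      (Set.Ici 0) := by
  have hderiv : ∀ t : ℝ, 0 < t →
      HasDerivAt (fun t => ∫ s in (1:ℝ)..t, g s / s) (g t / t) t := by
    intro t ht
    have hc : ContinuousOn (fun s => g s / s) (Set.Ioi 0) :=
      hg.div continuousOn_id fun x hx => ne_of_gt hx
    exact intervalIntegral.integral_hasDerivAt_right (cd_int g hg one_pos ht)
      (hc.stronglyMeasurableAtFilter isOpen_Ioi t ht) (hc.continuousAt (Ioi_mem_nhds ht))
  intro t _
  apply ContinuousAt.continuousWithinAt
  rcases lt_trichotomy t 1 with h | h | h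
  · refine (continuousAt_const (y := g 1)).congr ?_
    filter_upwards [gt_mem_nhds h] with s hs
    rw [if_neg hs.not_gt]
  · subst h
    have h1 := (hderiv 1 one_pos).tendsto_slope
    have h2 := (Real.hasDerivAt_log one_ne_zero).tendsto_slope
    have h3 := h1.div h2 (by norm_num)
    rw [continuousAt_iff_punctured_nhds]
    simp only [lt_irrefl, if_false]
    have h4 : Tendsto (fun t => (∫ s in (1:ℝ)..t, g s / s) / Real.log t)
        (nhdsWithin 1 {1}ᶜ) (nhds (g 1)) := by
      have e : g 1 / 1 / (1:ℝ)⁻¹ = g 1 := by simp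
      rw [e] at h3
      refine h3.congr' ?_
      filter_upwards [self_mem_nhdsWithin] with x hx
      have hx' : x - 1 ≠ 0 := sub_ne_zero.2 hx
      simp only [Pi.div_apply, slope_def_field, intervalIntegral.integral_same, Real.log_one,
        sub_zero]
      rw [div_div_div_cancel_right₀ hx']
    refine Tendsto.if' h4 tendsto_const_nhds
  · have hd := ((hderiv t (by linarith)).continuousAt.div
      (Real.continuousAt_log (by linarith : t ≠ 0)) (Real.log_pos h).ne')
    refine hd.congr ?_
    filter_upwards [lt_mem_nhds h] with s hs
    rw [if_pos hs]
    rfl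

/-- For a nonincreasing `μ : [0,∞) → [0,∞)` with `∫₀^t μ ≤ K log(1+t)`,
`g(t) = (1/log(1+t))∫₀^t μ(s) ds` and `Mg` its logarithmic Cesàro mean, the following are
equivalent: (a) `γ(Mg) = A` for every positive linear functional `γ` on `C_b[0,∞)` with
`γ(1) = 1` vanishing on every continuous function vanishing at infinity (i.e. every
singular state); (b) `lim_{t→∞} g(t) = A`. -/
theorem connes_dixmier_measurable_iff_cesaro_limit (μ : ℝ → ℝ)
    (hμ0 : ∀ s : ℝ, 0 ≤ s → 0 ≤ μ s) (hmono : AntitoneOn μ (Set.Ici 0))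
    (K : ℝ) (hK : 0 < K)
    (hint : ∀ t : ℝ, 0 < t → (∫ s in (0:ℝ)..t, μ s) ≤ K * Real.log (1 + t))
    (A : ℝ) :
    (∀ γ : (ℝ → ℝ) →ₗ[ℝ] ℝ,
        -- γ is positive on C_b[0,∞)
        (∀ h : ℝ → ℝ, ContinuousOn h (Set.Ici 0) → (∃ B : ℝ, ∀ x : ℝ, 0 ≤ x → |h x| ≤ B) →
          (∀ x : ℝ, 0 ≤ x → 0 ≤ h x) → 0 ≤ γ h) →
        -- γ(1) = 1
        γ (fun _ => 1) = 1 →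
        -- γ is singular: it vanishes on continuous functions vanishing at infinity
        (∀ h : ℝ → ℝ, ContinuousOn h (Set.Ici 0) → Tendsto h atTop (nhds 0) → γ h = 0) →
        γ (MgFn μ) = A) ↔
      Tendsto (gFn μ) atTop (nhds A) := by
  have hII : ∀ a b : ℝ, 0 ≤ a → 0 ≤ b → IntervalIntegrable μ volume a b := by
    intro a b ha hb
    exact (hmono.mono fun x hx => (le_min ha hb).trans hx.1).intervalIntegrable
  have hF0 : ∀ s : ℝ, 0 ≤ s → 0 ≤ ∫ x in (0:ℝ)..s, μ x := fun s hs =>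
    intervalIntegral.integral_nonneg hs fun x hx => hμ0 x hx.1
  have hF : ∀ s t : ℝ, 0 ≤ s → s ≤ t → (∫ x in (0:ℝ)..s, μ x) ≤ ∫ x in (0:ℝ)..t, μ x := by
    intro s t hs hst
    rw [← intervalIntegral.integral_add_adjacent_intervals (hII 0 s le_rfl hs)
      (hII s t hs (hs.trans hst))]
    have : 0 ≤ ∫ x in s..t, μ x :=
      intervalIntegral.integral_nonneg hst fun x hx => hμ0 x (hs.trans hx.1)
    linarith
  have hgF : ∀ t : ℝ, 0 < t → gFn μ t = (∫ s in (0:ℝ)..t, μ s) / Real.log (1 + t) :=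
    fun t ht => if_pos ht
  have hg0 : ∀ t : ℝ, 0 < t → 0 ≤ gFn μ t := by
    intro t ht
    rw [hgF t ht]
    exact div_nonneg (hF0 t ht.le) (Real.log_nonneg (by linarith))
  have hgK : ∀ t : ℝ, 0 < t → gFn μ t ≤ K := by
    intro t ht
    rw [hgF t ht, div_le_iff₀ (Real.log_pos (by linarith))]
    exact hint t ht
  have hgc : ContinuousOn (gFn μ) (Set.Ioi 0) := by
    intro t ht
    have ht : 0 < t := ht
    apply ContinuousAt.continuousWithinAt
    have hFc : ContinuousAt (fun t => ∫ s in (0:ℝ)..t, μ s) t := by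
      have h1 : ContinuousOn (fun x => ∫ s in (0:ℝ)..x, μ s) (Set.uIcc 0 (t + 1)) :=
        intervalIntegral.continuousOn_primitive_interval'
          (hII 0 (t + 1) le_rfl (by linarith)) Set.left_mem_uIcc
      rw [Set.uIcc_of_le (by linarith)] at h1
      exact h1.continuousAt (Icc_mem_nhds ht (by linarith))
    have hlc : ContinuousAt (fun t : ℝ => Real.log (1 + t)) t :=
      ContinuousAt.log (by fun_prop) (by linarith)
    refine (hFc.div hlc (Real.log_pos (by linarith)).ne').congr ?_
    filter_upwards [lt_mem_nhds ht] with s hs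
    exact (hgF s hs).symm
  have hMc : ContinuousOn (MgFn μ) (Set.Ici 0) := cd_cont (gFn μ) hgc
  have hMe : (fun t => (∫ s in (1:ℝ)..t, gFn μ s / s) / Real.log t) =ᶠ[atTop] MgFn μ := by
    filter_upwards [eventually_gt_atTop 1] with t ht
    exact (if_pos ht).symm
  have hMb : ∀ x : ℝ, 0 ≤ x → |MgFn μ x| ≤ K := by
    intro x _
    unfold MgFn
    split_ifs with hx
    · have hl := Real.log_pos hx
      have h1 := cd_int_le (gFn μ) hgc one_pos hx.le (c := K)
        fun s hs _ => hgK s (by linarith)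
      have h2 := cd_le_int (gFn μ) hgc one_pos hx.le (c := 0)
        fun s hs _ => hg0 s (by linarith)
      rw [Real.log_one, sub_zero] at h1
      rw [zero_mul] at h2
      rw [abs_of_nonneg (div_nonneg h2 hl.le), div_le_iff₀ hl]
      exact h1
    · rw [abs_of_nonneg (hg0 1 one_pos)]
      exact hgK 1 one_pos
  constructor
  · intro H
    have hT := cd_tendsto_of_states (MgFn μ) K A hMb H
    exact cd_tauber (gFn μ) (fun t => ∫ s in (0:ℝ)..t, μ s) hgc hF hF0 hgF A (hT.congr' hMe.symm)
  · intro hA γ _ h1 hs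
    have hT : Tendsto (MgFn μ) atTop (nhds A) := (cd_cesaro (gFn μ) hgc A hA).congr' hMe
    have h0 := hs (MgFn μ - A • fun _ => (1:ℝ)) (hMc.sub (continuousOn_const (c := A • (1:ℝ)))) (by
      have := hT.sub_const A
      rw [sub_self] at this
      refine this.congr fun x => ?_
      simp)
    rw [map_sub, map_smul, h1, smul_eq_mul, mul_one] at h0
    linarith
end

section
/- Let μ : [0,∞) → [0,∞) be nonincreasing and let K > 0 be such that ∫₀^t μ(s) ds ≤ K ∫₀^t ds/(1+s) for every t > 0. Then for every real p ≥ 1 and every t > 0, ∫₀^t μ(s)^p ds ≤ K^p ∫₀^t ds/(1+s)^p. -/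
open MeasureTheory

lemma aux_lower (S : Set ℝ) (hS : IsLowerSet S) (f : ℝ → ℝ) (t : ℝ)
    (hF : ∀ x, 0 < x → 0 ≤ ∫ s in (0:ℝ)..x, f s) :
    0 ≤ ∫ s in Set.Ioc 0 t ∩ S, f s := by
  rcases Set.eq_empty_or_nonempty (Set.Ioc 0 t ∩ S) with h | ⟨b, hb⟩
  · simp [h]
  have hbdd : BddAbove (Set.Ioc 0 t ∩ S) := ⟨t, fun x hx => hx.1.2⟩
  set a := sSup (Set.Ioc 0 t ∩ S) with ha
  have hba : b ≤ a := le_csSup hbdd hb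
  have ha0 : 0 < a := lt_of_lt_of_le hb.1.1 hba
  have h1 : Set.Ioc 0 t ∩ S ⊆ Set.Ioc 0 a := fun x hx => ⟨hx.1.1, le_csSup hbdd hx⟩
  have h2 : Set.Ioo 0 a ⊆ Set.Ioc 0 t ∩ S := by
    intro x hx
    obtain ⟨c, hc, hxc⟩ := exists_lt_of_lt_csSup ⟨b, hb⟩ hx.2
    exact ⟨⟨hx.1, hxc.le.trans hc.1.2⟩, hS hxc.le hc.2⟩
  have h3 : (Set.Ioc 0 t ∩ S : Set ℝ) =ᵐ[volume] Set.Ioc 0 a := by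
    apply Filter.EventuallyLE.antisymm
    · exact h1.eventuallyLE
    · exact (Ioo_ae_eq_Ioc (μ := volume)).symm.le.trans h2.eventuallyLE
  rw [setIntegral_congr_set h3, ← intervalIntegral.integral_of_le ha0.le]
  exact hF a ha0

lemma aux_weight (w f : ℝ → ℝ) (hw : Antitone w) (hw0 : ∀ s, 0 ≤ w s) (t : ℝ)
    (hf : IntegrableOn f (Set.Ioc 0 t))
    (hF : ∀ x, 0 < x → 0 ≤ ∫ s in (0:ℝ)..x, f s) :
    0 ≤ ∫ s in Set.Ioc 0 t, w s * f s := by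
  have key : ∫ s in Set.Ioc 0 t, w s * f s
      = ∫ s in Set.Ioc 0 t, ∫ y in Set.Ioc 0 (w 0),
          Set.indicator {q : ℝ × ℝ | q.2 < w q.1} (fun q => f q.1) (s, y) := by
    apply setIntegral_congr_fun measurableSet_Ioc
    intro s hs
    have e : (fun y => Set.indicator {q : ℝ × ℝ | q.2 < w q.1} (fun q => f q.1) (s, y))
        = Set.indicator (Set.Iio (w s)) (fun _ => f s) := by
      ext y
      simp [Set.indicator]
    have hle : w s ≤ w 0 := hw hs.1.le
    have e2 : (Set.Ioc 0 (w 0) ∩ Set.Iio (w s) : Set ℝ) = Set.Ioo 0 (w s) := by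
      ext y
      simp only [Set.mem_inter_iff, Set.mem_Ioc, Set.mem_Iio, Set.mem_Ioo]
      constructor
      · rintro ⟨⟨a, b⟩, c⟩
        exact ⟨a, c⟩
      · rintro ⟨a, c⟩
        exact ⟨⟨a, by linarith⟩, c⟩
    simp only [e]
    rw [setIntegral_indicator measurableSet_Iio, e2]
    simp [hw0 s]
  have hmeas : MeasurableSet {q : ℝ × ℝ | q.2 < w q.1} :=
    measurableSet_lt measurable_snd (hw.measurable.comp measurable_fst)
  rw [key, integral_integral_swap]
  · apply integral_nonneg
    intro y
    have e : (fun s => Set.indicator {q : ℝ × ℝ | q.2 < w q.1} (fun q => f q.1) (s, y))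
        = Set.indicator {s | y < w s} f := by
      ext s
      simp [Set.indicator]
    simp only [e]
    rw [setIntegral_indicator (measurableSet_lt measurable_const hw.measurable)]
    apply aux_lower _ _ f t hF
    intro a b hab ha
    exact lt_of_lt_of_le ha (hw hab)
  · have : Integrable (fun q : ℝ × ℝ => f q.1)
        ((volume.restrict (Set.Ioc 0 t)).prod (volume.restrict (Set.Ioc 0 (w 0)))) :=
      Integrable.comp_fst hf _
    exact this.indicator hmeas

lemma aux_conv (a b p : ℝ) (ha : 0 ≤ a) (hb : 0 < b) (hp : 1 ≤ p) :
    p * (a ^ (p - 1) * (b - a)) ≤ b ^ p - a ^ p := by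
  rcases ha.eq_or_lt with rfl | ha
  · rcases hp.eq_or_lt with rfl | hp
    · simp
    · rw [Real.zero_rpow (by linarith), Real.zero_rpow (by linarith)]
      simp only [zero_mul, mul_zero, sub_zero]
      positivity
  have h := one_add_mul_self_le_rpow_one_add (s := b / a - 1) (by
    have : 0 < b / a := by positivity
    linarith) hp
  rw [add_sub_cancel, Real.div_rpow hb.le ha.le, le_div_iff₀ (by positivity)] at h
  have e : a ^ p = a ^ (p - 1) * a := by
    rw [Real.rpow_sub_one ha.ne']
    field_simp
  have : (1 + p * (b / a - 1)) * a ^ p = a ^ p + p * (a ^ (p - 1) * (b - a)) := by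
    rw [e]
    field_simp
  linarith

/-- **Hardy–Littlewood–Pólya type estimate (Lemma 10.1).**
If `μ : [0,∞) → [0,∞)` is nonincreasing and `∫₀^t μ(s) ds ≤ K ∫₀^t ds/(1+s)` for all
`t > 0`, then for every real `p ≥ 1` and every `t > 0`,
`∫₀^t μ(s)^p ds ≤ K^p ∫₀^t ds/(1+s)^p`. -/
theorem pow_submajorization (μ : ℝ → ℝ)
    (hμ0 : ∀ s : ℝ, 0 ≤ s → 0 ≤ μ s) (hmono : AntitoneOn μ (Set.Ici 0))
    (K : ℝ) (hK : 0 < K)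
    (h : ∀ t : ℝ, 0 < t →
      (∫ s in (0:ℝ)..t, μ s) ≤ K * ∫ s in (0:ℝ)..t, 1 / (1 + s)) :
    ∀ p : ℝ, 1 ≤ p → ∀ t : ℝ, 0 < t →
      (∫ s in (0:ℝ)..t, μ s ^ p) ≤ K ^ p * ∫ s in (0:ℝ)..t, (1 / (1 + s)) ^ p := by
  intro p hp t ht
  have hsub : ∀ x : ℝ, 0 < x → Set.uIcc 0 x ⊆ Set.Ici 0 := fun x hx => by
    rw [Set.uIcc_of_le hx.le]
    exact Set.Icc_subset_Ici_self
  have hgc : ∀ x : ℝ, 0 < x → ContinuousOn (fun s : ℝ => 1 / (1 + s)) (Set.uIcc 0 x) := by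
    intro x hx
    apply ContinuousOn.div (by fun_prop) (by fun_prop)
    intro s hs
    have : (0:ℝ) ≤ s := hsub x hx hs
    positivity
  have hμi : ∀ x : ℝ, 0 < x → IntervalIntegrable μ volume 0 x := fun x hx =>
    (hmono.mono (hsub x hx)).intervalIntegrable
  have hμpi : IntervalIntegrable (fun s => μ s ^ p) volume 0 t := by
    apply AntitoneOn.intervalIntegrable
    intro a ha b hb hab
    exact Real.rpow_le_rpow (hμ0 _ (hsub t ht hb)) (hmono (hsub t ht ha) (hsub t ht hb) hab)
      (by linarith)
  have hgi : ∀ x : ℝ, 0 < x → IntervalIntegrable (fun s : ℝ => K * (1 / (1 + s))) volume 0 x :=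
    fun x hx => ((hgc x hx).intervalIntegrable).const_mul K
  have hgpi : IntervalIntegrable (fun s : ℝ => K ^ p * (1 / (1 + s)) ^ p) volume 0 t :=
    (((hgc t ht).rpow_const (fun s hs => Or.inr (by linarith))).intervalIntegrable).const_mul _
  set f : ℝ → ℝ := fun s => K * (1 / (1 + s)) - μ s with hfdef
  set w : ℝ → ℝ := fun s => μ (max s 0) ^ (p - 1) with hwdef
  have hw : Antitone w := by
    intro a b hab
    exact Real.rpow_le_rpow (hμ0 _ (le_max_right _ _))
      (hmono (Set.mem_Ici.2 (le_max_right _ _)) (Set.mem_Ici.2 (le_max_right _ _)) (max_le_max hab le_rfl)) (by linarith)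
  have hw0 : ∀ s, 0 ≤ w s := fun s => Real.rpow_nonneg (hμ0 _ (le_max_right _ _)) _
  have hfi : IntegrableOn f (Set.Ioc 0 t) := ((hgi t ht).sub (hμi t ht)).1
  have hF : ∀ x, 0 < x → 0 ≤ ∫ s in (0:ℝ)..x, f s := by
    intro x hx
    rw [hfdef, intervalIntegral.integral_sub (hgi x hx) (hμi x hx),
      intervalIntegral.integral_const_mul]
    linarith [h x hx]
  have hmain := aux_weight w f hw hw0 t hfi hF
  have hwf : IntegrableOn (fun s => w s * f s) (Set.Ioc 0 t) := by
    apply Integrable.bdd_mul (c := w 0) hfi hw.measurable.aestronglyMeasurable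
    refine (ae_restrict_iff' measurableSet_Ioc).2 (Filter.Eventually.of_forall fun s hs => ?_)
    rw [Real.norm_of_nonneg (hw0 s)]
    exact hw hs.1.le
  have hle : ∫ s in Set.Ioc 0 t, p * (w s * f s)
      ≤ ∫ s in Set.Ioc 0 t, (K ^ p * (1 / (1 + s)) ^ p - μ s ^ p) := by
    apply setIntegral_mono_on (hwf.const_mul p) (hgpi.sub hμpi).1 measurableSet_Ioc
    intro s hs
    have hs0 : 0 ≤ s := hs.1.le
    have hc := aux_conv (μ s) (K * (1 / (1 + s))) p (hμ0 s hs0) (by positivity) hp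
    rw [Real.mul_rpow hK.le (by positivity)] at hc
    simpa only [hwdef, hfdef, max_eq_left hs0] using hc
  rw [integral_const_mul, ← intervalIntegral.integral_of_le ht.le,
    ← intervalIntegral.integral_of_le ht.le, intervalIntegral.integral_sub hgpi hμpi,
    intervalIntegral.integral_const_mul] at hle
  rw [← intervalIntegral.integral_of_le ht.le] at hmain
  have : 0 ≤ p * ∫ s in (0:ℝ)..t, w s * f s := mul_nonneg (by linarith) hmain
  linarith
end

section
/- Let μ : [0,∞) → [0,∞) be nonincreasing and let K > 0 satisfy ∫₀^t μ(s) ds ≤ K·log(1+t) for all t > 0. Then for every C > K there exists t₀ > 0 such that for all t ≥ t₀ the Lebesgue measure of the set {s ≥ 0 : μ(s) > 1/t} is at most C·t·log t. -/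
open MeasureTheory

/-- **Distribution function estimate (Lemma 10.4).**
If `μ : [0,∞) → [0,∞)` is nonincreasing and `∫₀^t μ(s) ds ≤ K·log(1+t)` for all `t > 0`,
then for every `C > K` one eventually has
`|{s ≥ 0 : μ(s) > 1/t}| ≤ C·t·log t`. -/
theorem distribution_function_estimate (μ : ℝ → ℝ)
    (hμ0 : ∀ s : ℝ, 0 ≤ s → 0 ≤ μ s) (hmono : AntitoneOn μ (Set.Ici 0))
    (K : ℝ) (hK : 0 < K)
    (h : ∀ t : ℝ, 0 < t → (∫ s in (0:ℝ)..t, μ s) ≤ K * Real.log (1 + t)) :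
    ∀ C : ℝ, K < C → ∃ t₀ : ℝ, 0 < t₀ ∧ ∀ t : ℝ, t₀ ≤ t →
      volume {s : ℝ | 0 ≤ s ∧ 1 / t < μ s} ≤ ENNReal.ofReal (C * t * Real.log t) := by
  intro C hC
  have hC0 : 0 < C := hK.trans hC
  have hp : 0 < C / K - 1 := by
    have : 1 < C / K := (one_lt_div hK).2 hC
    linarith
  have h1 := (isLittleO_log_rpow_atTop hp).bound (c := 1 / (2 * C)) (by positivity)
  have h2 := (tendsto_rpow_atTop (y := C / K) (by positivity)).eventually_gt_atTop 2
  obtain ⟨a, ha⟩ := Filter.eventually_atTop.1 (h1.and h2)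
  refine ⟨max a 2, by positivity, fun t ht => ?_⟩
  have hat : a ≤ t := (le_max_left _ _).trans ht
  have h2t : 2 ≤ t := (le_max_right _ _).trans ht
  have ht0 : 0 < t := by linarith
  obtain ⟨hl, hb⟩ := ha t hat
  have hlog : 0 < Real.log t := Real.log_pos (by linarith)
  have hr : 0 < t ^ (C / K - 1) := Real.rpow_pos_of_pos ht0 _
  rw [Real.norm_of_nonneg hlog.le, Real.norm_of_nonneg hr.le] at hl
  have hmul : t ^ (C / K) = t ^ (C / K - 1) * t := by
    rw [Real.rpow_sub_one ht0.ne']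
    field_simp
  have hS0 : 0 < C * t * Real.log t := by positivity
  have hkey : 1 + C * t * Real.log t < t ^ (C / K) := by
    have : C * t * Real.log t ≤ C * t * (1 / (2 * C) * t ^ (C / K - 1)) :=
      mul_le_mul_of_nonneg_left hl (by positivity)
    have e : C * t * (1 / (2 * C) * t ^ (C / K - 1)) = t ^ (C / K) / 2 := by
      rw [hmul]
      field_simp
    linarith
  have hsub : {s : ℝ | 0 ≤ s ∧ 1 / t < μ s} ⊆ Set.Icc 0 (C * t * Real.log t) := by
    rintro s ⟨hs0, hs⟩
    refine ⟨hs0, ?_⟩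
    by_contra hcon
    push Not at hcon
    have hI := h _ hS0
    set S := C * t * Real.log t with hS
    have hint : IntervalIntegrable μ volume 0 S := by
      apply AntitoneOn.intervalIntegrable
      rw [Set.uIcc_of_le hS0.le]
      exact hmono.mono Set.Icc_subset_Ici_self
    have hlow : (∫ _ in (0:ℝ)..S, 1 / t) ≤ ∫ s in (0:ℝ)..S, μ s := by
      apply intervalIntegral.integral_mono_on hS0.le (by simp) hint
      intro x hx
      exact hs.le.trans (hmono hx.1 hs0 (hx.2.trans hcon.le))
    rw [intervalIntegral.integral_const, smul_eq_mul, sub_zero] at hlow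
    have e1 : S * (1 / t) = C * Real.log t := by
      rw [hS]
      field_simp
    have h3 : Real.log (1 + S) < C / K * Real.log t := by
      rw [← Real.log_rpow ht0]
      exact Real.log_lt_log (by linarith) hkey
    have h4 : K * Real.log (1 + S) < K * (C / K * Real.log t) :=
      mul_lt_mul_of_pos_left h3 hK
    have e2 : K * (C / K * Real.log t) = C * Real.log t := by
      field_simp
    linarith
  calc _ ≤ volume (Set.Icc 0 (C * t * Real.log t)) := measure_mono hsub
    _ = _ := by rw [Real.volume_Icc, sub_zero]
end

section
/- Let μ : [0,∞) → [0,∞) be nonincreasing with ∫₀^t μ(s) ds ≤ K·log(1+t) for all t > 0 and some K > 0, let λ(u) = |{s ≥ 0 : μ(s) > u}| (Lebesgue measure), let C > 0 and A ∈ ℝ. Then the following are equivalent: (a) lim_{t→∞} (1/log(1+t))∫₀^t μ(s) ds = A; (b) lim_{t→∞} (1/log(1+t))∫₀^{λ(1/t)} μ(s) ds = A; (c) lim_{t→∞} (1/log(1+t))∫₀^{C·t·log t} μ(s) ds = A. -/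
open Filter MeasureTheory

namespace DixAux

lemma tL : Tendsto (fun t : ℝ => Real.log (1 + t)) atTop atTop :=
  Real.tendsto_log_atTop.comp (tendsto_atTop_add_const_left _ 1 tendsto_id)

lemma tsmall : Tendsto (fun t : ℝ => Real.log (1 + Real.log (1 + t)) / Real.log (1 + t))
    atTop (nhds 0) := by
  have h1 : Tendsto (fun x : ℝ => Real.log (1 + x) / x) atTop (nhds 0) := by
    have h2 : Tendsto (fun x : ℝ => Real.log (1 + x) / (1 + x)) atTop (nhds 0) :=
      (Real.isLittleO_log_id_atTop.tendsto_div_nhds_zero).comp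
        (tendsto_atTop_add_const_left _ 1 tendsto_id)
    have h3 : Tendsto (fun x : ℝ => 2 * (Real.log (1 + x) / (1 + x))) atTop (nhds 0) := by
      simpa using h2.const_mul 2
    refine squeeze_zero' ?_ ?_ h3
    · filter_upwards [eventually_ge_atTop 1] with x hx
      have : 0 ≤ Real.log (1 + x) := Real.log_nonneg (by linarith)
      positivity
    · filter_upwards [eventually_ge_atTop 1] with x hx
      have : 0 ≤ Real.log (1 + x) := Real.log_nonneg (by linarith)
      rw [← mul_div_assoc, div_le_div_iff₀ (by linarith) (by linarith)]
      nlinarith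
  exact h1.comp tL

lemma ev_big : ∀ᶠ t : ℝ in atTop, 1 < t ∧ 1 ≤ Real.log t := by
  filter_upwards [eventually_gt_atTop 1, Real.tendsto_log_atTop.eventually_ge_atTop 1] with t h1 h2
  exact ⟨h1, h2⟩

lemma upper {t : ℝ} (h1 : 1 < t) (h2 : 1 ≤ Real.log t) :
    Real.log (1 + t * Real.log t ^ 2) ≤
      Real.log (1 + t) + 2 * Real.log (1 + Real.log (1 + t)) := by
  have hl : Real.log t ≤ Real.log (1 + t) := Real.log_le_log (by linarith) (by linarith)
  have hp : 0 < 1 + Real.log (1 + t) := by linarith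
  have e : Real.log (1 + t) + 2 * Real.log (1 + Real.log (1 + t))
      = Real.log ((1 + t) * (1 + Real.log (1 + t)) ^ 2) := by
    rw [Real.log_mul (by linarith) (by positivity), Real.log_pow]; norm_num
  rw [e]
  apply Real.log_le_log (by positivity)
  have : Real.log t ^ 2 ≤ (1 + Real.log (1 + t)) ^ 2 := by gcongr; linarith
  have h4 : 1 ≤ (1 + Real.log (1 + t)) ^ 2 := by nlinarith
  nlinarith

lemma lower_s14 {t : ℝ} (h1 : 1 < t) (h2 : 1 ≤ Real.log t) :
    Real.log (1 + t) - 2 * Real.log (1 + Real.log (1 + t)) ≤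
      Real.log (1 + t / Real.log t ^ 2) := by
  have hl : Real.log t ≤ Real.log (1 + t) := Real.log_le_log (by linarith) (by linarith)
  have hp : 0 < 1 + Real.log (1 + t) := by linarith
  have e : Real.log (1 + t) - 2 * Real.log (1 + Real.log (1 + t))
      = Real.log ((1 + t) / (1 + Real.log (1 + t)) ^ 2) := by
    rw [Real.log_div (by linarith) (by positivity), Real.log_pow]; norm_num
  rw [e]
  apply Real.log_le_log (by positivity)
  have : Real.log t ^ 2 ≤ (1 + Real.log (1 + t)) ^ 2 := by gcongr; linarith
  have h4 : 1 ≤ Real.log t ^ 2 := by nlinarith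
  calc (1 + t) / (1 + Real.log (1 + t)) ^ 2 ≤ (1 + t) / Real.log t ^ 2 := by gcongr
    _ = 1 / Real.log t ^ 2 + t / Real.log t ^ 2 := by ring
    _ ≤ 1 + t / Real.log t ^ 2 := by
        gcongr
        rw [div_le_one (by linarith)]; exact h4

lemma ratio_up : Tendsto (fun t : ℝ => Real.log (1 + t * Real.log t ^ 2) / Real.log (1 + t))
    atTop (nhds 1) := by
  have h3 : Tendsto (fun t : ℝ => 1 + 2 * (Real.log (1 + Real.log (1 + t)) / Real.log (1 + t)))
      atTop (nhds 1) := by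
    simpa using (tsmall.const_mul 2).const_add 1
  refine tendsto_of_tendsto_of_tendsto_of_le_of_le' tendsto_const_nhds h3 ?_ ?_
  · filter_upwards [ev_big] with t ⟨h1, h2⟩
    have hL : 0 < Real.log (1 + t) := Real.log_pos (by linarith)
    rw [le_div_iff₀ hL, one_mul]
    apply Real.log_le_log (by linarith)
    have : 1 ≤ Real.log t ^ 2 := by nlinarith
    nlinarith
  · filter_upwards [ev_big] with t ⟨h1, h2⟩
    have hL : 0 < Real.log (1 + t) := Real.log_pos (by linarith)
    rw [div_le_iff₀ hL]
    have := upper h1 h2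
    field_simp
    linarith

lemma ratio_down : Tendsto (fun t : ℝ => Real.log (1 + t / Real.log t ^ 2) / Real.log (1 + t))
    atTop (nhds 1) := by
  have h3 : Tendsto (fun t : ℝ => 1 - 2 * (Real.log (1 + Real.log (1 + t)) / Real.log (1 + t)))
      atTop (nhds 1) := by
    simpa using (tsmall.const_mul 2).const_sub 1
  refine tendsto_of_tendsto_of_tendsto_of_le_of_le' h3 tendsto_const_nhds ?_ ?_
  · filter_upwards [ev_big] with t ⟨h1, h2⟩
    have hL : 0 < Real.log (1 + t) := Real.log_pos (by linarith)
    rw [le_div_iff₀ hL]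
    have := lower_s14 h1 h2
    refine le_trans (le_of_eq ?_) this
    field_simp
  · filter_upwards [ev_big] with t ⟨h1, h2⟩
    have hL : 0 < Real.log (1 + t) := Real.log_pos (by linarith)
    rw [div_le_one hL]
    apply Real.log_le_log (by positivity)
    have : 1 ≤ Real.log t ^ 2 := by nlinarith
    have := div_le_self (by linarith : 0 ≤ t) this
    linarith

lemma t_up : Tendsto (fun t : ℝ => t * Real.log t ^ 2) atTop atTop := by
  refine tendsto_atTop_mono' _ ?_ tendsto_id
  filter_upwards [ev_big] with t ⟨h1, h2⟩
  have : 1 ≤ Real.log t ^ 2 := by nlinarith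
  simp only [id]
  nlinarith

lemma t_down : Tendsto (fun t : ℝ => t / Real.log t ^ 2) atTop atTop := by
  have h0 : Tendsto (fun t : ℝ => Real.log t ^ 2 / t) atTop (nhds 0) :=
    (Real.isLittleO_pow_log_id_atTop (n := 2)).tendsto_div_nhds_zero
  have h1 : Tendsto (fun t : ℝ => Real.log t ^ 2 / t) atTop (nhdsWithin 0 (Set.Ioi 0)) := by
    rw [tendsto_nhdsWithin_iff]
    refine ⟨h0, ?_⟩
    filter_upwards [ev_big] with t ⟨h1, h2⟩
    simp only [Set.mem_Ioi]
    positivity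
  refine h1.inv_tendsto_nhdsGT_zero.congr ?_
  intro t
  simp

lemma key (F G : ℝ → ℝ) (hF : ∀ a b, 0 ≤ a → a ≤ b → F a ≤ F b)
    (h1 : ∀ᶠ t in atTop, F t - 1 ≤ G t) (h2 : ∀ᶠ t in atTop, G t ≤ F (t * Real.log t ^ 2))
    (A : ℝ) :
    Tendsto (fun t => F t / Real.log (1 + t)) atTop (nhds A) ↔
    Tendsto (fun t => G t / Real.log (1 + t)) atTop (nhds A) := by
  have hinv : Tendsto (fun t : ℝ => 1 / Real.log (1 + t)) atTop (nhds 0) := by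
    simp only [one_div]
    exact tL.inv_tendsto_atTop
  have hLpos : ∀ᶠ t : ℝ in atTop, 0 < Real.log (1 + t) := tL.eventually_gt_atTop 0
  constructor
  · intro ha
    have lo : Tendsto (fun t => F t / Real.log (1 + t) - 1 / Real.log (1 + t)) atTop (nhds A) := by
      simpa using ha.sub hinv
    have up : Tendsto (fun t => F (t * Real.log t ^ 2) / Real.log (1 + t * Real.log t ^ 2) *
        (Real.log (1 + t * Real.log t ^ 2) / Real.log (1 + t))) atTop (nhds A) := by
      simpa using (ha.comp t_up).mul ratio_up
    refine tendsto_of_tendsto_of_tendsto_of_le_of_le' lo up ?_ ?_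
    · filter_upwards [h1, hLpos] with t ht hL
      rw [← sub_div]; gcongr
    · filter_upwards [h2, hLpos, t_up.eventually hLpos] with t ht hL hL2
      rw [div_mul_div_cancel₀ hL2.ne']; gcongr
  · intro hb
    have up : Tendsto (fun t => G t / Real.log (1 + t) + 1 / Real.log (1 + t)) atTop (nhds A) := by
      simpa using hb.add hinv
    have lo : Tendsto (fun t => G (t / Real.log t ^ 2) / Real.log (1 + t / Real.log t ^ 2) *
        (Real.log (1 + t / Real.log t ^ 2) / Real.log (1 + t))) atTop (nhds A) := by
      simpa using (hb.comp t_down).mul ratio_down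
    refine tendsto_of_tendsto_of_tendsto_of_le_of_le' lo up ?_ ?_
    · filter_upwards [t_down.eventually h2, hLpos, t_down.eventually hLpos, ev_big,
        t_down.eventually_ge_atTop 1] with t ht hL hL2 ⟨h3, h4⟩ h5
      rw [div_mul_div_cancel₀ hL2.ne']
      gcongr
      refine ht.trans (hF _ _ (by positivity) ?_)
      have h6 : 1 ≤ Real.log t ^ 2 := by nlinarith
      have h7 : Real.log (t / Real.log t ^ 2) ≤ Real.log t :=
        Real.log_le_log (by linarith) (div_le_self (by linarith) h6)
      have h8 : 0 ≤ Real.log (t / Real.log t ^ 2) := Real.log_nonneg h5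
      calc t / Real.log t ^ 2 * Real.log (t / Real.log t ^ 2) ^ 2
          ≤ t / Real.log t ^ 2 * Real.log t ^ 2 := by gcongr
        _ = t := by field_simp
    · filter_upwards [h1, hLpos] with t ht hL
      rw [← add_div]; gcongr; linarith

end DixAux

/-- **Proposition 10.5 (limit form).** For a nonincreasing `μ : [0,∞) → [0,∞)` with
`∫₀^t μ ≤ K·log(1+t)`, distribution function `λ(u) = |{s ≥ 0 : μ(s) > u}|`, `C > 0`
and `A ∈ ℝ`, the following are equivalent:
(a) `lim_{t→∞} (1/log(1+t))∫₀^t μ = A`;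
(b) `lim_{t→∞} (1/log(1+t))∫₀^{λ(1/t)} μ = A`;
(c) `lim_{t→∞} (1/log(1+t))∫₀^{C·t·log t} μ = A`. -/
theorem dixmier_trace_truncation_tfae (μ : ℝ → ℝ)
    (hμ0 : ∀ s : ℝ, 0 ≤ s → 0 ≤ μ s) (hmono : AntitoneOn μ (Set.Ici 0))
    (K : ℝ) (hK : 0 < K)
    (h : ∀ t : ℝ, 0 < t → (∫ s in (0:ℝ)..t, μ s) ≤ K * Real.log (1 + t))
    (C : ℝ) (hC : 0 < C) (A : ℝ) :
    List.TFAE [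
      Tendsto (fun t : ℝ => (∫ s in (0:ℝ)..t, μ s) / Real.log (1 + t))
        atTop (nhds A),
      Tendsto (fun t : ℝ =>
          (∫ s in (0:ℝ)..((volume {u : ℝ | 0 ≤ u ∧ 1 / t < μ u}).toReal), μ s) /
            Real.log (1 + t))
        atTop (nhds A),
      Tendsto (fun t : ℝ =>
          (∫ s in (0:ℝ)..(C * t * Real.log t), μ s) / Real.log (1 + t))
        atTop (nhds A)] := by
  have hint : ∀ a b : ℝ, 0 ≤ a → 0 ≤ b → IntervalIntegrable μ volume a b := by
    intro a b ha hb
    apply AntitoneOn.intervalIntegrable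
    refine hmono.mono ?_
    intro x hx
    exact (le_min ha hb).trans hx.1
  have hF : ∀ a b : ℝ, 0 ≤ a → a ≤ b → (∫ s in (0:ℝ)..a, μ s) ≤ ∫ s in (0:ℝ)..b, μ s := by
    intro a b ha hab
    rw [← intervalIntegral.integral_add_adjacent_intervals (hint 0 a le_rfl ha)
      (hint a b ha (ha.trans hab))]
    have : 0 ≤ ∫ s in a..b, μ s :=
      intervalIntegral.integral_nonneg hab (fun u hu => hμ0 u (ha.trans hu.1))
    linarith
  -- decay of the function at `t log² t`
  have hdecay : ∀ᶠ t : ℝ in atTop, μ (t * Real.log t ^ 2) ≤ 1 / t := by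
    filter_upwards [DixAux.ev_big, DixAux.tL.eventually_ge_atTop (12 * K),
      eventually_ge_atTop 2] with t ⟨h1, h2⟩ h3 h4
    have hv : 0 < t * Real.log t ^ 2 := by positivity
    have e1 : (t * Real.log t ^ 2) * μ (t * Real.log t ^ 2)
        ≤ ∫ s in (0:ℝ)..(t * Real.log t ^ 2), μ s := by
      have := intervalIntegral.integral_mono_on (μ := volume) hv.le
        (intervalIntegrable_const (c := μ (t * Real.log t ^ 2))) (hint 0 _ le_rfl hv.le)
        (fun x hx => hmono (Set.mem_Ici.2 hx.1) (Set.mem_Ici.2 hv.le) hx.2)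
      simpa using this
    have e2 := e1.trans (h _ hv)
    have e3 := DixAux.upper h1 h2
    have hL : 0 < Real.log (1 + t) := Real.log_pos (by linarith)
    have e4 : Real.log (1 + Real.log (1 + t)) ≤ Real.log (1 + t) := by
      have := Real.log_le_sub_one_of_pos (by linarith : 0 < 1 + Real.log (1 + t))
      linarith
    have e5 : Real.log (1 + t) ≤ 2 * Real.log t := by
      have : 2 * Real.log t = Real.log (t ^ 2) := by rw [Real.log_pow]; norm_num
      rw [this]
      exact Real.log_le_log (by linarith) (by nlinarith)
    have e6 : K * Real.log (1 + t * Real.log t ^ 2) ≤ Real.log t ^ 2 := by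
      have a1 : K * Real.log (1 + t * Real.log t ^ 2) ≤ K * (3 * Real.log (1 + t)) := by
        gcongr; linarith
      nlinarith
    have e7 : (t * μ (t * Real.log t ^ 2)) * Real.log t ^ 2 ≤ 1 * Real.log t ^ 2 := by
      calc _ = (t * Real.log t ^ 2) * μ (t * Real.log t ^ 2) := by ring
        _ ≤ _ := by linarith
    have e8 := le_of_mul_le_mul_right e7 (by positivity)
    rw [le_div_iff₀ (by linarith)]
    linarith
  have hsub : ∀ᶠ t : ℝ in atTop,
      {u : ℝ | 0 ≤ u ∧ 1 / t < μ u} ⊆ Set.Icc 0 (t * Real.log t ^ 2) := by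
    filter_upwards [hdecay, DixAux.ev_big] with t ht ⟨h1, h2⟩
    rintro u ⟨hu, hu2⟩
    refine ⟨hu, ?_⟩
    by_contra hc
    push Not at hc
    have := hmono (Set.mem_Ici.2 (by positivity : 0 ≤ t * Real.log t ^ 2)) (Set.mem_Ici.2 hu) hc.le
    linarith
  have hab := DixAux.key (fun t => ∫ s in (0:ℝ)..t, μ s)
    (fun t => ∫ s in (0:ℝ)..((volume {u : ℝ | 0 ≤ u ∧ 1 / t < μ u}).toReal), μ s) hF
    (by
      filter_upwards [hsub, DixAux.ev_big] with t ht ⟨h1, h2⟩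
      have hfin : volume {u : ℝ | 0 ≤ u ∧ 1 / t < μ u} ≠ ⊤ :=
        ((measure_mono ht).trans_lt (by simp)).ne
      have hl0 : 0 ≤ (volume {u : ℝ | 0 ≤ u ∧ 1 / t < μ u}).toReal := ENNReal.toReal_nonneg
      have hout : ∀ s, (volume {u : ℝ | 0 ≤ u ∧ 1 / t < μ u}).toReal < s → μ s ≤ 1 / t := by
        intro s hs
        by_contra hc
        push Not at hc
        have hs0 : 0 ≤ s := hl0.trans hs.le
        have hsb : Set.Icc 0 s ⊆ {u : ℝ | 0 ≤ u ∧ 1 / t < μ u} := fun x hx =>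
          ⟨hx.1, hc.trans_le (hmono (Set.mem_Ici.2 hx.1) (Set.mem_Ici.2 hs0) hx.2)⟩
        have := ENNReal.toReal_mono hfin (measure_mono (μ := volume) hsb)
        rw [Real.volume_Icc, ENNReal.toReal_ofReal (by linarith)] at this
        linarith
      generalize (volume {u : ℝ | 0 ≤ u ∧ 1 / t < μ u}).toReal = l at hl0 hout ⊢
      rcases le_total t l with htl | htl
      · have := hF t l (by linarith) htl
        linarith
      · have e := intervalIntegral.integral_add_adjacent_intervals (hint 0 l le_rfl hl0)
          (hint l t hl0 (by linarith))
        have e2 : ∫ s in l..t, μ s ≤ ∫ s in l..t, 1 / t := by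
          apply intervalIntegral.integral_mono_on_of_le_Ioo htl (hint l t hl0 (by linarith))
            intervalIntegrable_const
          intro x hx
          exact hout x hx.1
        have e3 : ∫ s in l..t, 1 / t ≤ 1 := by
          rw [intervalIntegral.integral_const, smul_eq_mul, mul_one_div,
            div_le_one (by linarith)]
          linarith
        linarith)
    (by
      filter_upwards [hsub, DixAux.ev_big] with t ht ⟨h1, h2⟩
      apply hF _ _ ENNReal.toReal_nonneg
      have := ENNReal.toReal_mono (by simp) (measure_mono (μ := volume) ht)
      rwa [Real.volume_Icc, sub_zero, ENNReal.toReal_ofReal (by positivity)] at this) A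
  have hac := DixAux.key (fun t => ∫ s in (0:ℝ)..t, μ s)
    (fun t => ∫ s in (0:ℝ)..(C * t * Real.log t), μ s) hF
    (by
      filter_upwards [DixAux.ev_big, Real.tendsto_log_atTop.eventually_ge_atTop (1 / C)]
        with t ⟨h1, h2⟩ h3
      have h4 : 1 ≤ Real.log t * C := (div_le_iff₀ hC).1 h3
      have := hF t (C * t * Real.log t) (by linarith) (by nlinarith)
      linarith)
    (by
      filter_upwards [DixAux.ev_big, Real.tendsto_log_atTop.eventually_ge_atTop C]
        with t ⟨h1, h2⟩ h3
      refine hF _ _ (by positivity) ?_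
      calc C * t * Real.log t = C * (t * Real.log t) := by ring
        _ ≤ Real.log t * (t * Real.log t) := by gcongr
        _ = _ := by ring) A
  tfae_have 1 ↔ 2 := hab
  tfae_have 1 ↔ 3 := hac
  tfae_finish
end
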